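/- arXiv:2107.14672 — 3 statements merged into one kernel-verified Lean document; each statement's English description precedes it below -/
import Mathlib

section
/- Let u < v and let ỹ^u_{t,k} := max_{t' ∈ [t,u]} ŷ^{t'}_{t',k}. Then Σ_{k=1}^m Σ_{t=1}^u ỹ^u_{t,k} · C_{t,k}(X̂^u) ≤ Σ_{k=1}^m Σ_{t=1}^u ỹ^u_{t,k} · C_{t,k}(X̂^v). -/
open Finset

/-- A lane-representation schedule `y` (where `y t k ∈ {0,…,d}` is the server type
serving lane `k` at time `t`, and `0` means no active server) is feasible for the
truncated instance with horizon `T`, `d` server types, `m j` servers of type `j`,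
`mtot` lanes and job volumes `lam`:
* all lanes are empty at time `0` and after time `T`, and beyond lane `mtot`;
* demand: lane `k` has an active server whenever `k ≤ lam t`;
* server types are in `{0,…,d}` and sorted in descending order of lanes;
* at most `m j` lanes use server type `j` at any time. -/
def LaneFeasible (T d mtot : ℕ) (m lam : ℕ → ℕ) (y : ℕ → ℕ → ℕ) : Prop :=
  (∀ k, y 0 k = 0) ∧
  (∀ t k, T < t → y t k = 0) ∧
  (∀ t k, mtot < k → y t k = 0) ∧
  (∀ t ∈ Finset.Icc 1 T, ∀ k ∈ Finset.Icc 1 mtot, k ≤ lam t → 1 ≤ y t k) ∧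
  (∀ t k, y t k ≤ d) ∧
  (∀ t k k', k ≤ k' → y t k' ≤ y t k) ∧
  (∀ t j, 1 ≤ j →
    ((Finset.Icc 1 mtot).filter (fun k => y t k = j)).card ≤ m j)

/-- The cost of lane-schedule `y` in lane `k` at time slot `t`: operating cost of the
server type used there, plus switching cost if the server type changed. -/
noncomputable def laneCostTK (β l : ℕ → ℝ) (y : ℕ → ℕ → ℕ) (t k : ℕ) : ℝ :=
  if y t k = 0 then 0
  else if y (t - 1) k = y t k then l (y t k)
  else l (y t k) + β (y t k)

/-- Total cost of a lane-representation schedule over horizon `T` and `mtot` lanes. -/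
noncomputable def laneCost (T mtot : ℕ) (β l : ℕ → ℝ) (y : ℕ → ℕ → ℕ) : ℝ :=
  ∑ t ∈ Finset.Icc 1 T, ∑ k ∈ Finset.Icc 1 mtot, laneCostTK β l y t k

/-- An optimal lane-representation schedule: feasible of minimum cost. -/
def LaneOptimal (T d mtot : ℕ) (m lam : ℕ → ℕ) (β l : ℕ → ℝ) (y : ℕ → ℕ → ℕ) : Prop :=
  LaneFeasible T d mtot m lam y ∧
  ∀ y', LaneFeasible T d mtot m lam y' →
    laneCost T mtot β l y ≤ laneCost T mtot β l y'

/-- `ytilde Yhat u t k = max_{t'' ∈ [t,u]} ŷ^{t''}_{t'',k}`: the largest server type used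
in lane `k` at the final time slot of any of the schedules `X̂^{t''}`, `t'' ∈ [t,u]`. -/
def ytilde (Yhat : ℕ → ℕ → ℕ → ℕ) (u t k : ℕ) : ℕ :=
  (Finset.Icc t u).sup (fun t'' => Yhat t'' t'' k)

open Classical in
/-- Follow `a` on the region `R`; outside, follow `b` but never downgrade an active lane. -/
noncomputable def mixS (R : ℕ → ℕ → Prop) (a b : ℕ → ℕ → ℕ) : ℕ → ℕ → ℕ
  | 0, _ => 0
  | t + 1, k => if R (t + 1) k then a (t + 1) k else
      if b (t + 1) k = 0 then 0 else max (mixS R a b t k) (b (t + 1) k)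

lemma mixS_pos {R : ℕ → ℕ → Prop} {a b : ℕ → ℕ → ℕ} {t k : ℕ} (h : R (t + 1) k) :
    mixS R a b (t + 1) k = a (t + 1) k := by
  simp [mixS, h]

lemma mixS_neg {R : ℕ → ℕ → Prop} {a b : ℕ → ℕ → ℕ} {t k : ℕ} (h : ¬ R (t + 1) k) :
    mixS R a b (t + 1) k =
      if b (t + 1) k = 0 then 0 else max (mixS R a b t k) (b (t + 1) k) := by
  simp [mixS, h]

lemma le_mixS {R : ℕ → ℕ → Prop} {a b : ℕ → ℕ → ℕ} (hb0 : ∀ k, b 0 k = 0)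
    (hab : ∀ t k, R t k → b t k ≤ a t k) (t k : ℕ) : b t k ≤ mixS R a b t k := by
  cases t with
  | zero => simp [hb0]
  | succ t =>
    by_cases h : R (t + 1) k
    · rw [mixS_pos h]; exact hab _ _ h
    · rw [mixS_neg h]; split_ifs with h0
      · omega
      · exact le_max_right _ _

lemma mixS_feasible {R : ℕ → ℕ → Prop} {a b : ℕ → ℕ → ℕ} {T T' d mtot : ℕ} {m lam : ℕ → ℕ}
    (ha : LaneFeasible T' d mtot m lam a) (hb : LaneFeasible T d mtot m lam b)
    (hR : ∀ t k k', k ≤ k' → R t k' → R t k) (hRT : ∀ t k, R t k → t ≤ T)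
    (hab : ∀ t k, R t k → b t k ≤ a t k)
    (hA : ∀ t k k', R t k → mixS R a b t k' ≤ a t k') :
    LaneFeasible T d mtot m lam (mixS R a b) := by
  obtain ⟨a0, aT, am, aD, ad, as, ac⟩ := ha
  obtain ⟨b0, bT, bm, bD, bd, bs, bc⟩ := hb
  have hs : ∀ t k k', k ≤ k' → mixS R a b t k' ≤ mixS R a b t k := by
    intro t
    induction t with
    | zero => intro k k' _; simp [mixS]
    | succ t ih =>
      intro k k' hk
      by_cases h : R (t + 1) k
      · rw [mixS_pos h]
        exact (hA _ _ _ h).trans (as _ _ _ hk)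
      · have h' : ¬ R (t + 1) k' := fun h' => h (hR _ _ _ hk h')
        rw [mixS_neg h, mixS_neg h']
        have h1 := ih _ _ hk
        have h2 := bs (t + 1) _ _ hk
        split_ifs <;> omega
  refine ⟨fun k => by simp [mixS], ?_, ?_, ?_, ?_, hs, ?_⟩
  · intro t k ht
    cases t with
    | zero => omega
    | succ t =>
      rw [mixS_neg (fun h => by have := hRT _ _ h; omega), if_pos (bT _ _ ht)]
  · intro t k hk
    cases t with
    | zero => simp [mixS]
    | succ t =>
      by_cases h : R (t + 1) k
      · rw [mixS_pos h]; exact am _ _ hk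
      · rw [mixS_neg h, if_pos (bm _ _ hk)]
  · intro t ht k hk hl
    exact (bD t ht k hk hl).trans (le_mixS b0 hab t k)
  · intro t
    induction t with
    | zero => intro k; simp [mixS]
    | succ t ih =>
      intro k
      by_cases h : R (t + 1) k
      · rw [mixS_pos h]; exact ad _ _
      · rw [mixS_neg h]
        have := ih k
        have := bd (t + 1) k
        split_ifs <;> omega
  · intro t
    induction t with
    | zero =>
      intro j hj
      rw [Finset.filter_false_of_mem]
      · simp
      · intro k _; simp only [mixS]; omega
    | succ t ih =>
      intro j hj
      by_cases hex : ∃ k, R (t + 1) k ∧ a (t + 1) k = j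
      · obtain ⟨k, hk, hkj⟩ := hex
        refine (Finset.card_le_card ?_).trans (ac (t + 1) j hj)
        intro k' hk'
        simp only [Finset.mem_filter] at hk' ⊢
        refine ⟨hk'.1, ?_⟩
        by_cases h : R (t + 1) k'
        · rw [← hk'.2, mixS_pos h]
        · have h1 := hA _ _ k' hk
          have h2 : k ≤ k' := by
            by_contra hc
            exact h (hR _ _ _ (by omega) hk)
          have h3 := as (t + 1) _ _ h2
          omega
      · have key : ∀ k, mixS R a b (t + 1) k = j →
            max (mixS R a b t k) (b (t + 1) k) = j := by
          intro k hk
          by_cases h : R (t + 1) k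
          · rw [mixS_pos h] at hk
            exact absurd ⟨k, h, hk⟩ hex
          · rw [mixS_neg h] at hk
            split_ifs at hk with h0
            · omega
            · exact hk
        by_cases hB : ∀ k, mixS R a b (t + 1) k = j → mixS R a b t k = j
        · refine (Finset.card_le_card ?_).trans (ih j hj)
          intro k' hk'
          simp only [Finset.mem_filter] at hk' ⊢
          exact ⟨hk'.1, hB _ hk'.2⟩
        · refine (Finset.card_le_card ?_).trans (bc (t + 1) j hj)
          intro k' hk'
          simp only [Finset.mem_filter] at hk' ⊢
          refine ⟨hk'.1, ?_⟩
          push Not at hB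
          obtain ⟨k, hk, hkB⟩ := hB
          have e1 := key _ hk
          have e2 := key _ hk'.2
          rcases le_total k k' with h | h
          · have := hs t _ _ h
            omega
          · have := bs (t + 1) _ _ h
            omega

lemma mixS_cost_le {R : ℕ → ℕ → Prop} {a b : ℕ → ℕ → ℕ} {d : ℕ} {β l : ℕ → ℝ}
    (hl : ∀ j j', 1 ≤ j → j < j' → j' ≤ d → l j' < l j)
    (hβ0 : ∀ j, 1 ≤ j → j ≤ d → 0 < β j)
    (hb0 : ∀ k, b 0 k = 0) (hab : ∀ t k, R t k → b t k ≤ a t k)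
    (hd : ∀ t k, mixS R a b t k ≤ d) (t k : ℕ) (h : ¬ R (t + 1) k) :
    laneCostTK β l (mixS R a b) (t + 1) k ≤ laneCostTK β l b (t + 1) k ∧
    (b (t + 1) k ≠ 0 → b (t + 1) k < mixS R a b (t + 1) k →
      laneCostTK β l (mixS R a b) (t + 1) k < laneCostTK β l b (t + 1) k) := by
  have e := mixS_neg (a := a) (b := b) h
  have h1 := le_mixS hb0 hab t k
  have h2 := hd (t + 1) k
  simp only [laneCostTK, Nat.add_sub_cancel]
  by_cases h0 : b (t + 1) k = 0
  · rw [if_pos h0] at e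
    simp [e, h0]
  · rw [if_neg h0] at e
    generalize mixS R a b (t + 1) k = z' at *
    generalize mixS R a b t k = z at *
    generalize b (t + 1) k = y' at *
    generalize b t k = y at *
    have hz' : z' ≠ 0 := by omega
    rw [if_neg hz', if_neg h0]
    rcases eq_or_lt_of_le (show y' ≤ z' by omega) with h3 | h3
    · subst h3
      refine ⟨?_, fun _ h => absurd h (lt_irrefl _)⟩
      have := hβ0 y' (by omega) h2
      split_ifs
      · exact le_rfl
      · linarith
      · omega
      · exact le_rfl
    · have h4 : z = z' := by omega
      have h5 := hl y' z' (by omega) h3 h2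
      have := hβ0 y' (by omega) (by omega)
      rw [if_pos h4]
      constructor
      · split_ifs <;> linarith
      · intro _ _
        split_ifs <;> linarith

lemma no_downshift {d mtot T : ℕ} {m lam : ℕ → ℕ} {β l : ℕ → ℝ} {y : ℕ → ℕ → ℕ}
    (hl : ∀ j j', 1 ≤ j → j < j' → j' ≤ d → l j' < l j)
    (hβ0 : ∀ j, 1 ≤ j → j ≤ d → 0 < β j)
    (hy : LaneOptimal T d mtot m lam β l y) (t k : ℕ) (hk : 1 ≤ k)
    (h : y (t + 1) k ≠ 0) : y t k ≤ y (t + 1) k := by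
  by_contra hc
  obtain ⟨hf, hopt⟩ := hy
  have hz := mixS_feasible (R := fun _ _ => False) hf hf (by simp) (by simp) (by simp) (by simp)
  have hle := hopt _ hz
  have hcost := fun t k => mixS_cost_le (R := fun _ _ => False) (a := y) (b := y) hl hβ0 hf.1
    (by simp) hz.2.2.2.2.1 t k (by simp)
  refine absurd hle (not_le.2 ?_)
  have hT : t + 1 ≤ T := by
    by_contra hh; exact h (hf.2.1 _ _ (by omega))
  have hkm : k ≤ mtot := by
    by_contra hh; exact h (hf.2.2.1 _ _ (by omega))
  have hgen : ∀ i ∈ Finset.Icc 1 T, ∀ k, laneCostTK β l (mixS (fun _ _ => False) y y) i k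
      ≤ laneCostTK β l y i k := by
    intro i hi k
    obtain ⟨i, rfl⟩ : ∃ i', i = i' + 1 := ⟨i - 1, by simp at hi; omega⟩
    exact (hcost i k).1
  unfold laneCost
  refine Finset.sum_lt_sum (fun i hi => Finset.sum_le_sum fun k _ => hgen i hi k)
    ⟨t + 1, by simp; omega, ?_⟩
  refine Finset.sum_lt_sum (fun k _ => hgen _ (by simp; omega) k) ⟨k, by simp; omega, ?_⟩
  refine (hcost t k).2 h ?_
  have h1 := le_mixS (R := fun _ _ => False) (a := y) (b := y) hf.1 (by simp) t k
  rw [mixS_neg (by simp), if_neg h]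
  omega

lemma region_cost_le_aux {d mtot u v : ℕ} {m lam : ℕ → ℕ} {β l : ℕ → ℝ} {a b : ℕ → ℕ → ℕ}
    (hl : ∀ j j', 1 ≤ j → j < j' → j' ≤ d → l j' < l j)
    (hβ0 : ∀ j, 1 ≤ j → j ≤ d → 0 < β j)
    (ha : LaneOptimal v d mtot m lam β l a) (hb : LaneOptimal u d mtot m lam β l b)
    (hab : ∀ t k, b t k ≤ a t k) (ha0 : ∀ t, a t 0 = a t 1)
    (R : ℕ → ℕ → Prop) [∀ t k, Decidable (R t k)]
    (hR : ∀ t k k', k ≤ k' → R t k' → R t k) (hRT : ∀ t k, R t k → t ≤ u)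
    (hRt : ∀ t k, R (t + 1) k → R t k) :
    ∑ t ∈ Finset.Icc 1 u, ∑ k ∈ Finset.Icc 1 mtot, (if R t k then laneCostTK β l b t k else 0)
    ≤ ∑ t ∈ Finset.Icc 1 u, ∑ k ∈ Finset.Icc 1 mtot,
      (if R t k then laneCostTK β l a t k else 0) := by
  have hA : ∀ t k, mixS R a b t k ≤ a t k := by
    intro t
    induction t with
    | zero => intro k; simp [mixS]
    | succ t ih =>
      intro k
      by_cases h : R (t + 1) k
      · rw [mixS_pos h]
      · rw [mixS_neg h]
        have h1 := ih k
        have h2 := hab (t + 1) k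
        split_ifs with h0
        · omega
        · have : a t k ≤ a (t + 1) k := by
            rcases Nat.eq_zero_or_pos k with rfl | hk
            · have := no_downshift hl hβ0 ha t 1 le_rfl (by rw [← ha0]; omega)
              rw [ha0, ha0]; exact this
            · exact no_downshift hl hβ0 ha t k hk (by omega)
          omega
  have hz := mixS_feasible ha.1 hb.1 hR hRT (fun t k _ => hab t k) (fun t _ k' _ => hA t k')
  have hle := hb.2 _ hz
  have hslot : ∀ t ∈ Finset.Icc 1 u, ∀ k ∈ Finset.Icc 1 mtot,
      laneCostTK β l (mixS R a b) t k ≤ laneCostTK β l b t k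
        - (if R t k then laneCostTK β l b t k else 0)
        + (if R t k then laneCostTK β l a t k else 0) := by
    intro t ht k _
    obtain ⟨t, rfl⟩ : ∃ t', t = t' + 1 := ⟨t - 1, by simp at ht; omega⟩
    by_cases h : R (t + 1) k
    · have e : mixS R a b t k = a t k := by
        cases t with
        | zero => simp [mixS, ha.1.1]
        | succ t => exact mixS_pos (hRt _ _ h)
      simp [h, laneCostTK, mixS_pos h, e]
    · have := (mixS_cost_le hl hβ0 hb.1.1 (fun t k _ => hab t k) hz.2.2.2.2.1 t k h).1
      simpa [h] using this
  have hsum := Finset.sum_le_sum fun t ht => Finset.sum_le_sum fun k hk => hslot t ht k hk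
  simp only [Finset.sum_add_distrib, Finset.sum_sub_distrib] at hsum
  unfold laneCost at hle
  linarith

/-- Make lane `0` (which carries no cost) a copy of lane `1`. -/
def normL (y : ℕ → ℕ → ℕ) (t k : ℕ) : ℕ := y t (max k 1)

lemma normL_cost (β l : ℕ → ℝ) (y : ℕ → ℕ → ℕ) (t k : ℕ) (hk : 1 ≤ k) :
    laneCostTK β l (normL y) t k = laneCostTK β l y t k := by
  simp [laneCostTK, normL, max_eq_left hk]

lemma normL_optimal {d mtot T : ℕ} {m lam : ℕ → ℕ} {β l : ℕ → ℝ} {y : ℕ → ℕ → ℕ}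
    (hy : LaneOptimal T d mtot m lam β l y) :
    LaneOptimal T d mtot m lam β l (normL y) := by
  obtain ⟨⟨h0, hT, hm, hD, hd, hs, hc⟩, ho⟩ := hy
  refine ⟨⟨fun k => h0 _, fun t k h => hT _ _ h, fun t k h => hm _ _ (by omega), ?_,
    fun t k => hd _ _, fun t k k' h => hs _ _ _ (by omega), ?_⟩, ?_⟩
  · intro t ht k hk hl
    have := hD t ht k hk hl
    simp only [Finset.mem_Icc] at hk
    simpa [normL, max_eq_left hk.1] using this
  · intro t j hj
    refine le_trans (le_of_eq ?_) (hc t j hj)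
    congr 1
    refine Finset.filter_congr fun k hk => ?_
    simp only [Finset.mem_Icc] at hk
    simp [normL, max_eq_left hk.1]
  · intro y' hy'
    refine le_trans (le_of_eq ?_) (ho y' hy')
    unfold laneCost
    refine Finset.sum_congr rfl fun t _ => Finset.sum_congr rfl fun k hk => ?_
    exact normL_cost _ _ _ _ _ (Finset.mem_Icc.1 hk).1

lemma region_cost_le {d mtot u v : ℕ} {m lam : ℕ → ℕ} {β l : ℕ → ℝ} {a b : ℕ → ℕ → ℕ}
    (hl : ∀ j j', 1 ≤ j → j < j' → j' ≤ d → l j' < l j)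
    (hβ0 : ∀ j, 1 ≤ j → j ≤ d → 0 < β j)
    (ha : LaneOptimal v d mtot m lam β l a) (hb : LaneOptimal u d mtot m lam β l b)
    (hab : ∀ t k, b t k ≤ a t k)
    (R : ℕ → ℕ → Prop) [∀ t k, Decidable (R t k)]
    (hR : ∀ t k k', k ≤ k' → R t k' → R t k) (hRT : ∀ t k, R t k → t ≤ u)
    (hRt : ∀ t k, R (t + 1) k → R t k) :
    ∑ k ∈ Finset.Icc 1 mtot, ∑ t ∈ Finset.Icc 1 u, (if R t k then laneCostTK β l b t k else 0)
    ≤ ∑ k ∈ Finset.Icc 1 mtot, ∑ t ∈ Finset.Icc 1 u,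
      (if R t k then laneCostTK β l a t k else 0) := by
  have h := region_cost_le_aux hl hβ0 (normL_optimal ha) (normL_optimal hb)
    (fun t k => hab _ _) (fun t => rfl) R hR hRT hRt
  rw [Finset.sum_comm] at h
  rw [Finset.sum_comm (s := Finset.Icc 1 u)] at h
  have e : ∀ y : ℕ → ℕ → ℕ, ∑ k ∈ Finset.Icc 1 mtot, ∑ t ∈ Finset.Icc 1 u,
      (if R t k then laneCostTK β l (normL y) t k else 0) =
      ∑ k ∈ Finset.Icc 1 mtot, ∑ t ∈ Finset.Icc 1 u,
      (if R t k then laneCostTK β l y t k else 0) := fun y =>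
    Finset.sum_congr rfl fun k hk => Finset.sum_congr rfl fun t _ => by
      rw [normL_cost _ _ _ _ _ (Finset.mem_Icc.1 hk).1]
  rwa [e, e] at h

/-- Let `Yhat t` be optimal schedules for the truncated instances, chosen
monotonically, and let `u < v`. Then the per-slot costs of `X̂^u` weighted by
`ỹ^u_{t,k}` are at most the correspondingly weighted per-slot costs of `X̂^v`:
`∑_{k=1}^{mtot} ∑_{t=1}^{u} ỹ^u_{t,k} · C_{t,k}(X̂^u) ≤ ∑_{k=1}^{mtot} ∑_{t=1}^{u} ỹ^u_{t,k} · C_{t,k}(X̂^v)`. -/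
theorem weighted_cost_le (d mtot : ℕ) (m lam : ℕ → ℕ) (β l : ℕ → ℝ)
    (hl : ∀ j j', 1 ≤ j → j < j' → j' ≤ d → l j' < l j)
    (hl0 : ∀ j, 1 ≤ j → j ≤ d → 0 ≤ l j)
    (hβ : ∀ j j', 1 ≤ j → j < j' → j' ≤ d → β j < β j')
    (hβ0 : ∀ j, 1 ≤ j → j ≤ d → 0 < β j)
    (Yhat : ℕ → ℕ → ℕ → ℕ)
    (hopt : ∀ t, LaneOptimal t d mtot m lam β l (Yhat t))
    (hdom : ∀ t t'' k, Yhat t t'' k ≤ Yhat (t + 1) t'' k)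
    (u v : ℕ) (huv : u < v) :
    ∑ k ∈ Finset.Icc 1 mtot, ∑ t ∈ Finset.Icc 1 u,
        (ytilde Yhat u t k : ℝ) * laneCostTK β l (Yhat u) t k
    ≤ ∑ k ∈ Finset.Icc 1 mtot, ∑ t ∈ Finset.Icc 1 u,
        (ytilde Yhat u t k : ℝ) * laneCostTK β l (Yhat v) t k := by
  have hmono : ∀ t k, Yhat u t k ≤ Yhat v t k := fun t k =>
    monotone_nat_of_le_succ (f := fun s => Yhat s t k) (fun s => hdom s t k) huv.le
  have hyd : ∀ t k, ytilde Yhat u t k ≤ d := fun t k =>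
    Finset.sup_le fun s _ => (hopt s).1.2.2.2.2.1 s k
  have hlayer : ∀ y : ℕ → ℕ → ℕ, ∑ k ∈ Finset.Icc 1 mtot, ∑ t ∈ Finset.Icc 1 u,
        (ytilde Yhat u t k : ℝ) * laneCostTK β l y t k =
      ∑ n ∈ Finset.range d, ∑ k ∈ Finset.Icc 1 mtot, ∑ t ∈ Finset.Icc 1 u,
        (if n < ytilde Yhat u t k then laneCostTK β l y t k else 0) := by
    intro y
    rw [Finset.sum_comm (s := Finset.range d)]
    refine Finset.sum_congr rfl fun k _ => ?_
    rw [Finset.sum_comm (s := Finset.range d)]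
    refine Finset.sum_congr rfl fun t _ => ?_
    rw [← Finset.sum_filter, Finset.sum_const, nsmul_eq_mul]
    congr 2
    have : (Finset.range d).filter (fun n => n < ytilde Yhat u t k)
        = Finset.range (ytilde Yhat u t k) := by
      ext n
      have := hyd t k
      simp only [Finset.mem_filter, Finset.mem_range]
      omega
    rw [this, Finset.card_range]
  rw [hlayer, hlayer]
  refine Finset.sum_le_sum fun n _ => ?_
  refine region_cost_le hl hβ0 (hopt v) (hopt u) hmono (fun t k => n < ytilde Yhat u t k)
    ?_ ?_ ?_
  · intro t k k' hk h
    exact lt_of_lt_of_le h (Finset.sup_mono_fun fun s _ => (hopt s).1.2.2.2.2.2.1 s k k' hk)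
  · intro t k h
    by_contra hc
    simp [ytilde, Finset.Icc_eq_empty (show ¬ t ≤ u by omega)] at h
  · intro t k h
    exact lt_of_lt_of_le h (Finset.sup_mono (Finset.Icc_subset_Icc (by omega) le_rfl))
end

section
/- The deterministic online algorithm A for data-center right-sizing with d heterogeneous server types (constant per-slot operating costs, no inefficient types) produces a feasible schedule whose total cost is at most 2d times the cost of an optimal offline schedule. -/
open Finset

/-- A schedule `x` (where `x t j` is the number of active servers of type `j` at time `t`)
is feasible for horizon `T`, `d` server types with `m j` servers of type `j`, and job
volumes `lam`: all servers are off at time `0` and after time `T`, the demand is met,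
and no more servers are used than available. -/
def Feasible (T d : ℕ) (m lam : ℕ → ℕ) (x : ℕ → ℕ → ℕ) : Prop :=
  (∀ j, x 0 j = 0) ∧
  (∀ t, T < t → ∀ j, x t j = 0) ∧
  (∀ t ∈ Finset.Icc 1 T, lam t ≤ ∑ j ∈ Finset.Icc 1 d, x t j ∧ ∀ j, x t j ≤ m j)

/-- Total cost of a schedule: operating costs plus switching costs for powering up. -/
noncomputable def cost (T d : ℕ) (β l : ℕ → ℝ) (x : ℕ → ℕ → ℕ) : ℝ :=
  ∑ t ∈ Finset.Icc 1 T, ∑ j ∈ Finset.Icc 1 d,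
    (l j * (x t j : ℝ) + β j * ((x t j - x (t - 1) j : ℕ) : ℝ))

/-- An optimal schedule: feasible and of minimum cost among feasible schedules. -/
def Optimal (T d : ℕ) (m lam : ℕ → ℕ) (β l : ℕ → ℝ) (x : ℕ → ℕ → ℕ) : Prop :=
  Feasible T d m lam x ∧
  ∀ x', Feasible T d m lam x' → cost T d β l x ≤ cost T d β l x'

/-- The lane representation: `lane d x t k` is the server type serving lane `k`
at time `t` (largest `j ∈ [1,d]` with `∑_{j'=j}^{d} x t j' ≥ k`, else `0`). -/
noncomputable def lane (d : ℕ) (x : ℕ → ℕ → ℕ) (t k : ℕ) : ℕ :=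
  sSup {j | j ∈ Finset.Icc 1 d ∧ k ≤ ∑ j' ∈ Finset.Icc j d, x t j'}

/-- The schedule produced by an online algorithm `A`: at each time slot `t ∈ [1,T]`,
the number of active servers of each type is determined only by the job volumes
`lam 1, …, lam t` seen so far. -/
def onlineSched (A : List ℕ → ℕ → ℕ) (T d : ℕ) (lam : ℕ → ℕ) (t j : ℕ) : ℕ :=
  if 1 ≤ t ∧ t ≤ T ∧ 1 ≤ j ∧ j ≤ d then
    A ((List.range t).map (fun i => lam (i + 1))) j
  else 0

/-! ### Lane states and schedules -/

/-- Admissible lane states (lane `k` is served by a server of type `y k`). -/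
def GoodSt (d N : ℕ) (m : ℕ → ℕ) (y : ℕ → ℕ) : Prop :=
  (∀ k, y k ≤ d) ∧ (∀ k k', k ≤ k' → y k' ≤ y k) ∧
  (∀ j, 1 ≤ j → j ≤ d → ∀ k, j ≤ y (k + m j) → j < y k) ∧ (∀ k, N ≤ k → y k = 0)

/-- Relaxed transition cost in a lane. -/
noncomputable def tc (B L : ℕ → ℝ) (a b : ℕ) : ℝ := L b + max 0 (B b - B a)

def Sch (d N : ℕ) (m lam : ℕ → ℕ) (u : ℕ) (y : ℕ → ℕ → ℕ) : Prop :=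
  (∀ k, y 0 k = 0) ∧ (∀ t, u < t → ∀ k, y t k = 0) ∧
  ∀ t, 1 ≤ t → t ≤ u → GoodSt d N m (y t) ∧ ∀ k, k < lam t → 1 ≤ y t k

noncomputable def FC (N : ℕ) (B L : ℕ → ℝ) (u : ℕ) (y : ℕ → ℕ → ℕ) : ℝ :=
  ∑ k ∈ range N, ∑ s ∈ range u, tc B L (y s k) (y (s + 1) k)

def tot (N u : ℕ) (y : ℕ → ℕ → ℕ) : ℕ := ∑ k ∈ range N, ∑ s ∈ range (u + 1), y s k

def Best (d N : ℕ) (m : ℕ → ℕ) (B L : ℕ → ℝ) (lam : ℕ → ℕ) (u : ℕ) (y : ℕ → ℕ → ℕ) : Prop :=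
  Sch d N m lam u y ∧ (∀ y', Sch d N m lam u y' → FC N B L u y ≤ FC N B L u y') ∧
  (∀ y', Sch d N m lam u y' → FC N B L u y' ≤ FC N B L u y → tot N u y' ≤ tot N u y)

lemma GoodSt.max {d N : ℕ} {m y y' : ℕ → ℕ} (h : GoodSt d N m y) (h' : GoodSt d N m y') :
    GoodSt d N m (fun k => max (y k) (y' k)) := by
  obtain ⟨h1, h2, h3, h4⟩ := h
  obtain ⟨g1, g2, g3, g4⟩ := h'
  refine ⟨fun k => max_le (h1 k) (g1 k), fun k k' hk => max_le_max (h2 k k' hk) (g2 k k' hk), ?_, ?_⟩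
  · intro j hj hjd k hk
    rcases le_max_iff.1 hk with hk | hk
    · exact lt_max_of_lt_left (h3 j hj hjd k hk)
    · exact lt_max_of_lt_right (g3 j hj hjd k hk)
  · intro k hk
    simp [h4 k hk, g4 k hk]

lemma GoodSt.min {d N : ℕ} {m y y' : ℕ → ℕ} (h : GoodSt d N m y) (h' : GoodSt d N m y') :
    GoodSt d N m (fun k => min (y k) (y' k)) := by
  obtain ⟨h1, h2, h3, h4⟩ := h
  obtain ⟨g1, g2, g3, g4⟩ := h'
  refine ⟨fun k => (min_le_left _ _).trans (h1 k),
    fun k k' hk => min_le_min (h2 k k' hk) (g2 k k' hk), ?_, ?_⟩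
  · intro j hj hjd k hk
    obtain ⟨ha, hb⟩ := le_min_iff.1 hk
    exact lt_min (h3 j hj hjd k ha) (g3 j hj hjd k hb)
  · intro k hk
    simp [h4 k hk]

open Classical in
lemma GoodSt.restrict {d N : ℕ} {m y : ℕ → ℕ} (h : GoodSt d N m y) (p : ℕ → Prop)
    (hp : ∀ k k', k ≤ k' → p k' → p k) :
    GoodSt d N m (fun k => if p k then y k else 0) := by
  obtain ⟨h1, h2, h3, h4⟩ := h
  refine ⟨?_, ?_, ?_, ?_⟩
  · intro k
    dsimp only
    split_ifs
    · exact h1 k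
    · exact Nat.zero_le _
  · intro k k' hk
    dsimp only
    by_cases hq : p k'
    · rw [if_pos hq, if_pos (hp k k' hk hq)]
      exact h2 k k' hk
    · rw [if_neg hq]
      exact Nat.zero_le _
  · intro j hj hjd k hk
    dsimp only at hk ⊢
    by_cases hq : p (k + m j)
    · rw [if_pos hq] at hk
      rw [if_pos (hp k _ (Nat.le_add_right _ _) hq)]
      exact h3 j hj hjd k hk
    · rw [if_neg hq] at hk
      omega
  · intro k hk
    simp [h4 k hk]

lemma tc_anti {B L : ℕ → ℝ} (hB : Monotone B) {a a' : ℕ} (b : ℕ) (h : a ≤ a') :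
    tc B L a' b ≤ tc B L a b := by
  unfold tc
  have := hB h
  gcongr

lemma tc_nonneg {B L : ℕ → ℝ} (hL0 : L 0 = 0) (hLp : ∀ a, 1 ≤ a → 0 < L a) (a b : ℕ) :
    0 ≤ tc B L a b := by
  unfold tc
  have h1 : 0 ≤ L b := by
    rcases Nat.eq_zero_or_pos b with h | h
    · rw [h, hL0]
    · exact (hLp b h).le
  have := le_max_left 0 (B b - B a)
  linarith

lemma tc_submod {B L : ℕ → ℝ} (hB : Monotone B) (a b a' b' : ℕ) :
    tc B L (min a b) (min a' b') + tc B L (max a b) (max a' b') ≤ tc B L a a' + tc B L b b' := by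
  unfold tc
  rcases le_total a b with h | h <;> rcases le_total a' b' with h' | h' <;>
    simp only [min_eq_left h, min_eq_right h, max_eq_left h, max_eq_right h, min_eq_left h',
      min_eq_right h', max_eq_left h', max_eq_right h'] <;> have h1 := hB h <;> have h2 := hB h'
  · linarith
  · rcases max_cases 0 (B b' - B a) with h3 | h3 <;> rcases max_cases 0 (B a' - B b) with h4 | h4 <;>
    rcases max_cases 0 (B a' - B a) with h5 | h5 <;> rcases max_cases 0 (B b' - B b) with h6 | h6 <;>
    linarith
  · rcases max_cases 0 (B a' - B b) with h3 | h3 <;> rcases max_cases 0 (B b' - B a) with h4 | h4 <;>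
    rcases max_cases 0 (B a' - B a) with h5 | h5 <;> rcases max_cases 0 (B b' - B b) with h6 | h6 <;>
    linarith
  · linarith

lemma Sch.zero_lane {d N : ℕ} {m lam : ℕ → ℕ} {u : ℕ} {y : ℕ → ℕ → ℕ} (h : Sch d N m lam u y)
    (t k : ℕ) (hk : N ≤ k) : y t k = 0 := by
  rcases Nat.eq_zero_or_pos t with h0 | h0
  · rw [h0]; exact h.1 k
  · by_cases ht : t ≤ u
    · exact (h.2.2 t h0 ht).1.2.2.2 k hk
    · exact h.2.1 t (by omega) k

lemma Sch.le_d {d N : ℕ} {m lam : ℕ → ℕ} {u : ℕ} {y : ℕ → ℕ → ℕ} (h : Sch d N m lam u y)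
    (t k : ℕ) : y t k ≤ d := by
  rcases Nat.eq_zero_or_pos t with h0 | h0
  · rw [h0, h.1 k]; exact Nat.zero_le _
  · by_cases ht : t ≤ u
    · exact (h.2.2 t h0 ht).1.1 k
    · rw [h.2.1 t (by omega) k]; exact Nat.zero_le _

lemma Sch.anti {d N : ℕ} {m lam : ℕ → ℕ} {u : ℕ} {y : ℕ → ℕ → ℕ} (h : Sch d N m lam u y)
    (t k k' : ℕ) (hk : k ≤ k') : y t k' ≤ y t k := by
  rcases Nat.eq_zero_or_pos t with h0 | h0
  · rw [h0, h.1 k, h.1 k']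
  · by_cases ht : t ≤ u
    · exact (h.2.2 t h0 ht).1.2.1 k k' hk
    · rw [h.2.1 t (by omega) k, h.2.1 t (by omega) k']

lemma sch_finite (d N : ℕ) (m lam : ℕ → ℕ) (u : ℕ) : {y | Sch d N m lam u y}.Finite := by
  let ext : (Fin (u + 1) → Fin N → Fin (d + 1)) → ℕ → ℕ → ℕ := fun g t k =>
    if h : t < u + 1 ∧ k < N then (g ⟨t, h.1⟩ ⟨k, h.2⟩ : ℕ) else 0
  refine (Set.finite_range ext).subset ?_
  intro y hy
  have hy : Sch d N m lam u y := hy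
  refine ⟨fun t k => ⟨y t k, Nat.lt_succ_of_le (hy.le_d t k)⟩, ?_⟩
  funext t k
  by_cases h : t < u + 1 ∧ k < N
  · simp [ext, h]
    intro h'
    omega
  · simp only [ext, h, dite_false]
    by_cases hk : N ≤ k
    · exact (hy.zero_lane t k hk).symm
    · exact (hy.2.1 t (by omega) k).symm

lemma exists_best {d N : ℕ} {m lam : ℕ → ℕ} {u : ℕ} (B L : ℕ → ℝ)
    (h : ∃ y, Sch d N m lam u y) : ∃ y, Best d N m B L lam u y := by
  obtain ⟨y0, hy0, hmin⟩ := Set.exists_min_image _ (FC N B L u) (sch_finite d N m lam u) h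
  have hfin : {y | Sch d N m lam u y ∧ FC N B L u y ≤ FC N B L u y0}.Finite :=
    (sch_finite d N m lam u).subset (fun y hy => hy.1)
  obtain ⟨y1, hy1, hmax⟩ := Set.exists_max_image _ (tot N u) hfin ⟨y0, hy0, le_refl _⟩
  exact ⟨y1, hy1.1, fun y' hy' => hy1.2.trans (hmin y' hy'),
    fun y' hy' hle => hmax y' ⟨hy', hle.trans hy1.2⟩⟩

/-- A best schedule cannot be strictly enlarged without increasing the cost. -/
lemma Best.max_le {d N : ℕ} {m lam : ℕ → ℕ} {B L : ℕ → ℝ} {u : ℕ} {b v : ℕ → ℕ → ℕ}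
    (hb : Best d N m B L lam u b) (hv : Sch d N m lam u v) (hbv : ∀ t k, b t k ≤ v t k)
    (hF : FC N B L u v ≤ FC N B L u b) (t k : ℕ) : v t k ≤ b t k := by
  by_contra hlt
  push Not at hlt
  have hk : k < N := by
    by_contra hk
    rw [hv.zero_lane t k (by omega)] at hlt
    omega
  have ht : t < u + 1 := by
    by_contra ht
    rw [hv.2.1 t (by omega) k] at hlt
    omega
  have h1 := hb.2.2 v hv hF
  have h2 : tot N u b < tot N u v := by
    unfold tot
    refine Finset.sum_lt_sum (fun k _ => Finset.sum_le_sum fun s _ => hbv s k)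
      ⟨k, Finset.mem_range.2 hk, Finset.sum_lt_sum (fun s _ => hbv s k)
        ⟨t, Finset.mem_range.2 ht, hlt⟩⟩
  omega

/-- Monotonicity of best schedules in the horizon. -/
lemma best_mono {d N : ℕ} {m lam : ℕ → ℕ} {B L : ℕ → ℝ} (hB : Monotone B) {u : ℕ}
    {a b : ℕ → ℕ → ℕ}
    (ha : Best d N m B L lam u a) (hb : Best d N m B L lam (u + 1) b) (t k : ℕ) :
    a t k ≤ b t k := by
  set v : ℕ → ℕ → ℕ := fun t k => max (a t k) (b t k) with hvdef
  set w : ℕ → ℕ → ℕ := fun t k => min (a t k) (b t k) with hwdef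
  have hv : Sch d N m lam (u + 1) v := by
    refine ⟨fun k => by simp [v, ha.1.1 k, hb.1.1 k],
      fun t ht k => by simp [v, ha.1.2.1 t (by omega) k, hb.1.2.1 t ht k], ?_⟩
    intro t h1 h2
    obtain ⟨hg, hdm⟩ := hb.1.2.2 t h1 h2
    refine ⟨?_, fun k hk => le_max_of_le_right (hdm k hk)⟩
    by_cases ht : t ≤ u
    · exact (ha.1.2.2 t h1 ht).1.max hg
    · have : v t = b t := by
        funext k
        simp [v, ha.1.2.1 t (by omega) k]
      rw [this]
      exact hg
  have hw : Sch d N m lam u w := by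
    refine ⟨fun k => by simp [w, ha.1.1 k], fun t ht k => by simp [w, ha.1.2.1 t (by omega) k], ?_⟩
    intro t h1 h2
    obtain ⟨hg, hdm⟩ := hb.1.2.2 t h1 (by omega)
    obtain ⟨hg', hdm'⟩ := ha.1.2.2 t h1 h2
    exact ⟨hg'.min hg, fun k hk => le_min (hdm' k hk) (hdm k hk)⟩
  have hF : FC N B L (u + 1) v ≤ FC N B L (u + 1) b := by
    have h1 := ha.2.1 w hw
    have h2 : FC N B L u w + FC N B L u v ≤ FC N B L u a + FC N B L u b := by
      unfold FC
      simp only [← Finset.sum_add_distrib]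
      exact Finset.sum_le_sum fun k _ => Finset.sum_le_sum fun s _ => tc_submod hB _ _ _ _
    have h3 : ∀ y : ℕ → ℕ → ℕ, FC N B L (u + 1) y =
        FC N B L u y + ∑ k ∈ range N, tc B L (y u k) (y (u + 1) k) := by
      intro y
      unfold FC
      simp only [Finset.sum_range_succ, Finset.sum_add_distrib]
    rw [h3, h3]
    have h4 : ∑ k ∈ range N, tc B L (v u k) (v (u + 1) k) ≤
        ∑ k ∈ range N, tc B L (b u k) (b (u + 1) k) := by
      refine Finset.sum_le_sum fun k _ => ?_
      have : v (u + 1) k = b (u + 1) k := by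
        simp [v, ha.1.2.1 (u + 1) (by omega) k]
      rw [this]
      exact tc_anti hB _ (le_max_right _ _)
    linarith
  have := hb.max_le hv (fun t k => le_max_right _ _) hF t k
  exact (le_max_left _ _).trans this

/-- In a best schedule an active lane never moves down to a smaller active type. -/
lemma best_up {d N : ℕ} {m lam : ℕ → ℕ} {B L : ℕ → ℝ} (hB : Monotone B)
    (hLm : ∀ a b, 1 ≤ a → a ≤ b → L b ≤ L a) {u : ℕ} {b : ℕ → ℕ → ℕ}
    (hb : Best d N m B L lam u b) (s k : ℕ) (h1 : 1 ≤ b (s + 1) k) :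
    b s k ≤ b (s + 1) k := by
  rcases Nat.eq_zero_or_pos s with hs | hs
  · rw [hs, hb.1.1 k]; exact Nat.zero_le _
  have hsu : s + 1 ≤ u := by
    by_contra h
    rw [hb.1.2.1 (s + 1) (by omega) k] at h1
    omega
  set v : ℕ → ℕ → ℕ := fun t k' =>
    if t = s + 1 then max (b (s + 1) k') (if k' ≤ k then b s k' else 0) else b t k' with hvdef
  have hbv : ∀ t k, b t k ≤ v t k := by
    intro t k'
    simp only [v]
    split_ifs with h h'
    · rw [h]; exact le_max_left _ _
    · rw [h]; exact le_max_left _ _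
    · exact le_rfl
  have hv : Sch d N m lam u v := by
    refine ⟨fun k => ?_, fun t ht k => ?_, ?_⟩
    · simp only [v]
      rw [if_neg (by omega)]
      exact hb.1.1 k
    · simp only [v]
      rw [if_neg (by omega)]
      exact hb.1.2.1 t ht k
    · intro t ht1 ht2
      obtain ⟨hg, hdm⟩ := hb.1.2.2 t ht1 ht2
      refine ⟨?_, fun k hk => (hdm k hk).trans (hbv t k)⟩
      by_cases ht : t = s + 1
      · subst ht
        have h2 := hg.max ((hb.1.2.2 s hs (by omega)).1.restrict (fun k' => k' ≤ k)
          (fun i j hij hj => hij.trans hj))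
        have : v (s + 1) = fun k' => max (b (s + 1) k') (if k' ≤ k then b s k' else 0) := by
          funext k'
          simp [v]
        rw [this]
        convert h2
      · have : v t = b t := by
          funext k'
          simp [v, ht]
        rw [this]
        exact hg
  have hF : FC N B L u v ≤ FC N B L u b := by
    unfold FC
    refine Finset.sum_le_sum fun k' _ => Finset.sum_le_sum fun t _ => ?_
    by_cases ht : t = s
    · subst ht
      have e1 : v t k' = b t k' := by simp [v]
      have e2 : v (t + 1) k' = max (b (t + 1) k') (if k' ≤ k then b t k' else 0) := by simp [v]
      rw [e1, e2]
      by_cases hk : k' ≤ k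
      · rw [if_pos hk]
        rcases le_total (b t k') (b (t + 1) k') with h | h
        · rw [max_eq_left h]
        · rw [max_eq_right h]
          unfold tc
          have h2 : 1 ≤ b (t + 1) k' := h1.trans (hb.1.anti _ _ _ hk)
          have h3 := hLm _ _ h2 h
          have h4 := le_max_left 0 (B (b (t + 1) k') - B (b t k'))
          simp only [sub_self, max_self]
          linarith
      · rw [if_neg hk, max_eq_left (Nat.zero_le _)]
    · have e2 : v (t + 1) k' = b (t + 1) k' := by
        simp only [v]
        rw [if_neg (by omega)]
      rw [e2]
      exact tc_anti hB _ (hbv t k')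
  have := hb.max_le hv hbv hF (s + 1) k
  refine le_trans ?_ this
  simp [v]

/-! ### The online algorithm in a single lane -/

noncomputable def wt (B L : ℕ → ℝ) (i : ℕ) : ℕ := ⌊B i / L i⌋₊

def eL (w h : ℕ → ℕ) : ℕ → ℕ
  | 0 => 0
  | t + 1 => max (eL w h t - 1) (if h (t + 1) = 0 then 0 else w (h (t + 1)) + 1)

def zL (w h : ℕ → ℕ) : ℕ → ℕ
  | 0 => 0
  | t + 1 => if eL w h (t + 1) = 0 then 0 else max (zL w h t) (h (t + 1))

def rL (w h : ℕ → ℕ) (i : ℕ) : ℕ → ℕ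
  | 0 => 0
  | t + 1 => if h (t + 1) = i then w i + 1 else rL w h i t - 1

noncomputable def gL (B L : ℕ → ℝ) (w h : ℕ → ℕ) (i : ℕ) : ℕ → ℝ
  | 0 => 0
  | t + 1 => gL B L w h i t + if h (t + 1) = i then
      L i + (if rL w h i t = 0 then B i else ((w i + 1 - rL w h i t : ℕ) : ℝ) * L i) else 0

def sg (h : ℕ → ℕ) (i : ℕ) : ℕ → ℕ
  | 0 => 0
  | t + 1 => if i ≤ h (t + 1) then t + 1 else sg h i t

lemma rL_le (w h : ℕ → ℕ) (i t : ℕ) : rL w h i t ≤ w i + 1 := by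
  induction t with
  | zero => simp [rL]
  | succ t ih => simp only [rL]; split_ifs <;> omega

lemma rL_le_eL (w h : ℕ → ℕ) (i t : ℕ) (hi : 1 ≤ i) : rL w h i t ≤ eL w h t := by
  induction t with
  | zero => simp [rL]
  | succ t ih =>
    simp only [rL, eL]
    by_cases hh : h (t + 1) = i
    · rw [if_pos hh, hh, if_neg (by omega)]
      exact le_max_right _ _
    · rw [if_neg hh]
      exact le_max_of_le_left (by omega)

lemma rL_pos (w h : ℕ → ℕ) (i t : ℕ) (hi : 1 ≤ i) (hr : 0 < rL w h i t) : i ≤ zL w h t := by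
  induction t with
  | zero => simp [rL] at hr
  | succ t ih =>
    have h1 := rL_le_eL w h i (t + 1) hi
    rw [zL, if_neg (by omega)]
    by_cases hh : h (t + 1) = i
    · rw [hh]; exact le_max_right _ _
    · rw [rL, if_neg hh] at hr
      exact le_max_of_le_left (ih (by omega))

lemma eL_exists (d : ℕ) (w h : ℕ → ℕ) (hd : ∀ t, h t ≤ d) (t : ℕ) (he : 0 < eL w h t) :
    ∃ i, 1 ≤ i ∧ i ≤ d ∧ eL w h t ≤ rL w h i t := by
  induction t with
  | zero => simp [eL] at he
  | succ t ih =>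
    by_cases hcase : eL w h (t + 1) = eL w h t - 1
    · obtain ⟨i, h1, h2, h3⟩ := ih (by omega)
      refine ⟨i, h1, h2, ?_⟩
      rw [hcase, rL]
      have := rL_le w h i t
      split_ifs <;> omega
    · have h0 : eL w h (t + 1) = if h (t + 1) = 0 then 0 else w (h (t + 1)) + 1 := by
        rw [eL] at hcase ⊢
        omega
      by_cases hh : h (t + 1) = 0
      · rw [if_pos hh] at h0; omega
      · rw [if_neg hh] at h0
        refine ⟨h (t + 1), by omega, hd _, ?_⟩
        rw [rL, if_pos rfl, h0]

lemma zL_ge (w h : ℕ → ℕ) (t : ℕ) : h (t + 1) ≤ zL w h (t + 1) := by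
  rw [zL]
  by_cases hh : h (t + 1) = 0
  · rw [hh]; exact Nat.zero_le _
  · have : eL w h (t + 1) ≠ 0 := by
      rw [eL, if_neg hh]
      omega
    rw [if_neg this]
    exact le_max_right _ _

lemma wt_mul_le {B L : ℕ → ℝ} (hB : ∀ i, 0 ≤ B i) (hLp : ∀ a, 1 ≤ a → 0 < L a) (i : ℕ)
    (hi : 1 ≤ i) : (wt B L i : ℝ) * L i ≤ B i := by
  have h := hLp i hi
  have h1 : (wt B L i : ℝ) ≤ B i / L i := Nat.floor_le (div_nonneg (hB i) h.le)
  rwa [le_div_iff₀ h] at h1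

lemma lt_wt_mul {B L : ℕ → ℝ} (hLp : ∀ a, 1 ≤ a → 0 < L a) (i : ℕ)
    (hi : 1 ≤ i) : B i < ((wt B L i : ℝ) + 1) * L i := by
  have h := hLp i hi
  have h1 : B i / L i < (wt B L i : ℝ) + 1 := Nat.lt_floor_add_one _
  rwa [div_lt_iff₀ h] at h1

noncomputable def termL (B L : ℕ → ℝ) (h : ℕ → ℕ) (t i : ℕ) : ℝ :=
  2 * (gL B L (wt B L) h i (t + 1) - gL B L (wt B L) h i t)
    + L i * ((rL (wt B L) h i t - 1 : ℕ) : ℝ) - L i * ((rL (wt B L) h i (t + 1) - 1 : ℕ) : ℝ)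

lemma termL_ne {B L : ℕ → ℝ} (hLp : ∀ a, 1 ≤ a → 0 < L a)
    (h : ℕ → ℕ) (t i : ℕ) (hi : 1 ≤ i) (hh : h (t + 1) ≠ i) :
    0 ≤ termL B L h t i ∧ (1 ≤ rL (wt B L) h i (t + 1) → L i ≤ termL B L h t i) := by
  have hp := hLp i hi
  unfold termL
  rw [gL, rL, if_neg hh, if_neg hh]
  constructor
  · have : ((rL (wt B L) h i t - 1 - 1 : ℕ) : ℝ) ≤ ((rL (wt B L) h i t - 1 : ℕ) : ℝ) := by
      exact_mod_cast Nat.sub_le _ _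
    nlinarith
  · intro h1
    have : ((rL (wt B L) h i t - 1 - 1 : ℕ) : ℝ) + 1 = ((rL (wt B L) h i t - 1 : ℕ) : ℝ) := by
      exact_mod_cast Nat.sub_add_cancel h1
    rw [← this]
    nlinarith

lemma termL_eq {B L : ℕ → ℝ} (hB : ∀ i, 0 ≤ B i) (hLp : ∀ a, 1 ≤ a → 0 < L a)
    (h : ℕ → ℕ) (t i : ℕ) (hi : 1 ≤ i) (hh : h (t + 1) = i) :
    L i + (if rL (wt B L) h i t = 0 then B i else 0) ≤ termL B L h t i := by
  have hp := hLp i hi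
  have h1 := wt_mul_le hB hLp i hi
  have h2 := rL_le (wt B L) h i t
  unfold termL
  rw [gL, rL, if_pos hh, if_pos hh]
  by_cases hr : rL (wt B L) h i t = 0
  · rw [if_pos hr, if_pos hr, hr]
    simp only [Nat.add_sub_cancel]
    push_cast
    nlinarith
  · rw [if_neg hr, if_neg hr]
    obtain ⟨q, hq⟩ : ∃ q, rL (wt B L) h i t = q + 1 := ⟨_, (Nat.succ_pred hr).symm⟩
    rw [hq] at h2 ⊢
    simp only [Nat.add_sub_cancel, Nat.add_sub_add_right]
    have : ((wt B L i - q : ℕ) : ℝ) = (wt B L i : ℝ) - q := by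
      rw [Nat.cast_sub (by omega)]
    have h3 : (q : ℝ) ≤ wt B L i := by exact_mod_cast (by omega : q ≤ wt B L i)
    rw [this]
    nlinarith

lemma lane_alg {d : ℕ} {B L : ℕ → ℝ} (hB : ∀ i, 0 ≤ B i) (hL0 : L 0 = 0)
    (hB0 : B 0 = 0)
    (hLp : ∀ a, 1 ≤ a → 0 < L a) (hLm : ∀ a b, 1 ≤ a → a ≤ b → L b ≤ L a)
    (h : ℕ → ℕ) (hd : ∀ t, h t ≤ d) (T : ℕ) :
    ∑ s ∈ range T, (L (zL (wt B L) h (s + 1)) +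
      if zL (wt B L) h (s + 1) ≠ zL (wt B L) h s then B (zL (wt B L) h (s + 1)) else 0)
    + ∑ i ∈ Icc 1 d, L i * ((rL (wt B L) h i T - 1 : ℕ) : ℝ)
    ≤ ∑ i ∈ Icc 1 d, 2 * gL B L (wt B L) h i T := by
  induction T with
  | zero => simp [rL, gL]
  | succ t ih =>
    rw [Finset.sum_range_succ]
    suffices hs : L (zL (wt B L) h (t + 1)) +
      (if zL (wt B L) h (t + 1) ≠ zL (wt B L) h t then B (zL (wt B L) h (t + 1)) else 0)
        ≤ ∑ i ∈ Icc 1 d, termL B L h t i by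
      unfold termL at hs
      rw [Finset.sum_sub_distrib, Finset.sum_add_distrib, ← Finset.mul_sum,
        Finset.sum_sub_distrib] at hs
      rw [← Finset.mul_sum] at ih ⊢
      linarith
    have hnn : ∀ i ∈ Icc 1 d, 0 ≤ termL B L h t i := by
      intro i hi
      have hi1 := (Finset.mem_Icc.1 hi).1
      by_cases hh : h (t + 1) = i
      · refine le_trans ?_ (termL_eq hB hLp h t i hi1 hh)
        have := hLp i hi1
        have := hB i
        split_ifs <;> linarith
      · exact (termL_ne hLp h t i hi1 hh).1
    by_cases h0 : h (t + 1) = 0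
    · by_cases he : eL (wt B L) h (t + 1) = 0
      · have hz : zL (wt B L) h (t + 1) = 0 := by rw [zL, if_pos he]
        rw [hz, hL0, hB0]
        simpa using Finset.sum_nonneg hnn
      · have hz : zL (wt B L) h (t + 1) = zL (wt B L) h t := by
          rw [zL, if_neg he, h0]; simp
        obtain ⟨i, hi1, hid, hr⟩ := eL_exists d (wt B L) h hd (t + 1) (by omega)
        have hr1 : 1 ≤ rL (wt B L) h i (t + 1) := by omega
        have h1 := rL_pos _ _ _ _ hi1 hr1
        have h2 := (termL_ne hLp h t i hi1 (by omega)).2 hr1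
        have h3 := Finset.single_le_sum hnn (Finset.mem_Icc.2 ⟨hi1, hid⟩)
        have h4 := hLm i _ hi1 h1
        rw [if_neg (by simp [hz])]
        linarith
    · have hi1 : 1 ≤ h (t + 1) := by omega
      have h1 := termL_eq hB hLp h t _ hi1 rfl
      have h3 := Finset.single_le_sum hnn (Finset.mem_Icc.2 ⟨hi1, hd (t + 1)⟩)
      have h4 := hLm _ _ hi1 (zL_ge (wt B L) h t)
      refine le_trans ?_ (h1.trans h3)
      refine add_le_add h4 ?_
      by_cases hr : rL (wt B L) h (h (t + 1)) t = 0
      · rw [if_pos hr]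
        split_ifs with hne
        · have he : eL (wt B L) h (t + 1) ≠ 0 := by
            rw [eL, if_neg h0]; omega
          rw [zL, if_neg he] at hne ⊢
          have : max (zL (wt B L) h t) (h (t + 1)) = h (t + 1) := by omega
          rw [this]
        · exact hB _
      · have h5 := rL_pos (wt B L) h _ t hi1 (by omega)
        have hz : zL (wt B L) h (t + 1) = zL (wt B L) h t := by
          have he : eL (wt B L) h (t + 1) ≠ 0 := by
            rw [eL, if_neg h0]; omega
          rw [zL, if_neg he]; omega
        rw [if_neg hr, if_neg (by simp [hz])]

/-! ### Lower bounds for the optimal schedules -/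

lemma sg_le (h : ℕ → ℕ) (i t : ℕ) : sg h i t ≤ t := by
  induction t with
  | zero => simp [sg]
  | succ t ih => simp only [sg]; split_ifs <;> omega

lemma sg_anti {h h' : ℕ → ℕ} (hh : ∀ t, h' t ≤ h t) (i t : ℕ) : sg h' i t ≤ sg h i t := by
  induction t with
  | zero => simp [sg]
  | succ t ih =>
    simp only [sg]
    have := hh (t + 1)
    have := sg_le h' i t
    split_ifs <;> omega

lemma sg_inv (w h : ℕ → ℕ) (i t : ℕ) :
    (sg h i t = 0 ∧ rL w h i t = 0) ∨ (1 ≤ sg h i t ∧ i < h (sg h i t)) ∨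
    (1 ≤ sg h i t ∧ h (sg h i t) = i ∧ rL w h i t = w i + 1 - (t - sg h i t)) := by
  induction t with
  | zero => simp [sg, rL]
  | succ t ih =>
    have hle := sg_le h i t
    rcases lt_trichotomy (h (t + 1)) i with hlt | heq | hgt
    · simp only [sg, rL]
      rw [if_neg (by omega), if_neg (by omega)]
      omega
    · simp only [sg, rL]
      rw [if_pos (by omega), if_pos heq]
      right; right
      exact ⟨by omega, heq, by omega⟩
    · simp only [sg]
      rw [if_pos (by omega)]
      right; left
      exact ⟨by omega, hgt⟩

/-- Telescoping of the switching costs. -/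
lemma tele {B L : ℕ → ℝ} (hL0 : L 0 = 0) (hLp : ∀ a, 1 ≤ a → 0 < L a)
    (y : ℕ → ℕ) (s n : ℕ) :
    B (y (s + n + 1)) - B (y s) + L (y (s + n + 1)) ≤
      ∑ t ∈ Ico s (s + n + 1), tc B L (y t) (y (t + 1)) := by
  induction n with
  | zero =>
    simp only [add_zero, Nat.Ico_succ_singleton, Finset.sum_singleton]
    unfold tc
    have := le_max_right 0 (B (y (s + 1)) - B (y s))
    linarith
  | succ n ih =>
    rw [show s + (n + 1) + 1 = (s + n + 1) + 1 by ring, Finset.sum_Ico_succ_top (by omega)]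
    have h1 : tc B L (y (s + n + 1)) (y (s + n + 1 + 1)) ≥
      L (y (s + n + 1 + 1)) + (B (y (s + n + 1 + 1)) - B (y (s + n + 1))) := by
      unfold tc
      have := le_max_right 0 (B (y (s + n + 1 + 1)) - B (y (s + n + 1)))
      linarith
    have h2 : 0 ≤ L (y (s + n + 1)) := by
      rcases Nat.eq_zero_or_pos (y (s + n + 1)) with h | h
      · rw [h, hL0]
      · exact (hLp _ h).le
    linarith

/-- If the lane is off at some point, the power-up cost must be paid. -/
lemma lane_off {B L : ℕ → ℝ} (hB0 : B 0 = 0) (hL0 : L 0 = 0) (hLp : ∀ a, 1 ≤ a → 0 < L a)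
    (y : ℕ → ℕ) (s0 s u : ℕ) (h0 : s0 ≤ s) (hs : s ≤ u) (hy : y s = 0) :
    L (y (u + 1)) + B (y (u + 1)) ≤ ∑ t ∈ Ico s0 (u + 1), tc B L (y t) (y (t + 1)) := by
  obtain ⟨n, rfl⟩ := Nat.exists_eq_add_of_le hs
  have h1 := tele (B := B) hL0 hLp y s n
  rw [hy, hB0] at h1
  have h2 : ∑ t ∈ Ico s (s + n + 1), tc B L (y t) (y (t + 1)) ≤
      ∑ t ∈ Ico s0 (s + n + 1), tc B L (y t) (y (t + 1)) :=
    Finset.sum_le_sum_of_subset_of_nonneg (Finset.Ico_subset_Ico_left h0)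
      (fun t _ _ => tc_nonneg hL0 hLp _ _)
  linarith

/-- If the lane is always on and only moves upwards. -/
lemma lane_on {B L : ℕ → ℝ} (hLm : ∀ a b, 1 ≤ a → a ≤ b → L b ≤ L a)
    (y : ℕ → ℕ) (s u : ℕ) (hy : ∀ t, s ≤ t → t ≤ u → 1 ≤ y t)
    (hup : ∀ t, 1 ≤ y (t + 1) → y t ≤ y (t + 1)) (hu : 1 ≤ y (u + 1)) :
    (∀ t, s ≤ t → t ≤ u + 1 → y t ≤ y (u + 1)) ∧
    ((u + 1 - s : ℕ) : ℝ) * L (y (u + 1)) ≤ ∑ t ∈ Ico s (u + 1), tc B L (y t) (y (t + 1)) := by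
  have hm : ∀ n t, s ≤ t → t + n = u + 1 → y t ≤ y (u + 1) := by
    intro n
    induction n with
    | zero => intro t _ h; rw [show t = u + 1 by omega]
    | succ n ih =>
      intro t h1 h2
      refine le_trans (hup t ?_) (ih (t + 1) (by omega) (by omega))
      by_cases h : t + 1 ≤ u
      · exact hy _ (by omega) h
      · rwa [show t + 1 = u + 1 by omega]
  refine ⟨fun t h1 h2 => hm (u + 1 - t) t h1 (by omega), ?_⟩
  have : ((u + 1 - s : ℕ) : ℝ) * L (y (u + 1)) = ∑ t ∈ Ico s (u + 1), L (y (u + 1)) := by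
    simp
  rw [this]
  refine Finset.sum_le_sum fun t ht => ?_
  rw [Finset.mem_Ico] at ht
  have h1 : 1 ≤ y (t + 1) := by
    by_cases h : t + 1 ≤ u
    · exact hy _ (by omega) h
    · rwa [show t + 1 = u + 1 by omega]
  have h2 := hLm _ _ h1 (hm (u + 1 - (t + 1)) (t + 1) (by omega) (by omega))
  unfold tc
  have := le_max_left 0 (B (y (t + 1)) - B (y t))
  linarith

/-- The increment of the lower bound is paid by the optimal schedule. -/
lemma lane_opt {B L : ℕ → ℝ} (hB : ∀ i, 0 ≤ B i) (hB0 : B 0 = 0) (hL0 : L 0 = 0)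
    (hLp : ∀ a, 1 ≤ a → 0 < L a) (hLm : ∀ a b, 1 ≤ a → a ≤ b → L b ≤ L a)
    (h y : ℕ → ℕ) (i u : ℕ) (hi : 1 ≤ i) (hy0 : y 0 = 0) (hyu : y (u + 1) = i)
    (hup : ∀ t, 1 ≤ y (t + 1) → y t ≤ y (t + 1))
    (hge : ∀ t, t ≤ u → 1 ≤ t → h t ≤ y t) :
    L i + (if rL (wt B L) h i u = 0 then B i
        else ((wt B L i + 1 - rL (wt B L) h i u : ℕ) : ℝ) * L i) ≤
      ∑ t ∈ Ico (sg h i u) (u + 1), tc B L (y t) (y (t + 1)) := by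
  have hle := sg_le h i u
  have hp := hLp i hi
  have hw := wt_mul_le hB hLp i hi
  have hw' := lt_wt_mul (B := B) hLp i hi
  have hdel : (if rL (wt B L) h i u = 0 then B i
        else ((wt B L i + 1 - rL (wt B L) h i u : ℕ) : ℝ) * L i) ≤ B i := by
    split_ifs with hr
    · exact le_rfl
    · refine le_trans ?_ hw
      have : ((wt B L i + 1 - rL (wt B L) h i u : ℕ) : ℝ) ≤ wt B L i := by
        exact_mod_cast (by omega : wt B L i + 1 - rL (wt B L) h i u ≤ wt B L i)
      nlinarith
  by_cases hoff : ∃ s, sg h i u ≤ s ∧ s ≤ u ∧ y s = 0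
  · obtain ⟨s, h1, h2, h3⟩ := hoff
    have := lane_off hB0 hL0 hLp y _ s u h1 h2 h3
    rw [hyu] at this
    linarith
  · push Not at hoff
    have hon := lane_on (B := B) hLm y (sg h i u) u
      (fun t h1 h2 => Nat.one_le_iff_ne_zero.2 (hoff t h1 h2)) hup (by omega)
    rw [hyu] at hon
    rcases sg_inv (wt B L) h i u with ⟨h1, h2⟩ | ⟨h1, h2⟩ | ⟨h1, h2, h3⟩
    · exact absurd hy0 (hoff 0 (by omega) (by omega))
    · have h4 := hge _ hle h1
      have h5 := hon.1 _ le_rfl (by omega)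
      omega
    · refine le_trans ?_ hon.2
      have e : ((u + 1 - sg h i u : ℕ) : ℝ) = ((u - sg h i u : ℕ) : ℝ) + 1 := by
        rw [show u + 1 - sg h i u = (u - sg h i u) + 1 by omega]
        push_cast; ring
      rw [e]
      by_cases hr : rL (wt B L) h i u = 0
      · rw [if_pos hr]
        have : (wt B L i : ℝ) + 1 ≤ ((u - sg h i u : ℕ) : ℝ) := by
          exact_mod_cast (by omega : wt B L i + 1 ≤ u - sg h i u)
        nlinarith
      · rw [if_neg hr]
        rw [show wt B L i + 1 - rL (wt B L) h i u = u - sg h i u by omega]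
        linarith

/-- Exchange argument: hybrid of two schedules. -/
lemma hybrid {d N : ℕ} {m lam : ℕ → ℕ} {B L : ℕ → ℝ} (hB : Monotone B) {u : ℕ}
    {a b : ℕ → ℕ → ℕ}
    (ha : Best d N m B L lam u a) (hb : Sch d N m lam (u + 1) b)
    (hab : ∀ t k, a t k ≤ b t k) (σ : ℕ → ℕ) (hσ : ∀ k k', k ≤ k' → σ k' ≤ σ k)
    (hσu : ∀ k, σ k ≤ u) :
    ∑ k ∈ range N, ∑ s ∈ range (σ k), tc B L (a s k) (a (s + 1) k) ≤
    ∑ k ∈ range N, ∑ s ∈ range (σ k), tc B L (b s k) (b (s + 1) k) := by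
  set c : ℕ → ℕ → ℕ := fun s k => max (a s k) (if s ≤ σ k then b s k else 0) with hc
  have hc1 : ∀ s k, s ≤ σ k → c s k = b s k := by
    intro s k h
    simp only [c, if_pos h]
    exact max_eq_right (hab s k)
  have hc2 : ∀ s k, ¬ s ≤ σ k → c s k = a s k := by
    intro s k h
    simp only [c, if_neg h]
    exact max_eq_left (Nat.zero_le _)
  have hS : Sch d N m lam u c := by
    refine ⟨fun k => ?_, fun t ht k => ?_, fun t h1 h2 => ⟨?_, fun k hk => ?_⟩⟩
    · rw [hc1 0 k (Nat.zero_le _)]; exact hb.1 k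
    · have := hσu k
      rw [hc2 t k (by omega)]
      exact ha.1.2.1 t ht k
    · have h3 := (ha.1.2.2 t h1 h2).1.max ((hb.2.2 t h1 (by omega)).1.restrict (fun k => t ≤ σ k)
        (fun k k' hk h => h.trans (hσ k k' hk)))
      convert h3
    · exact ((ha.1.2.2 t h1 h2).2 k hk).trans (le_max_left _ _)
  have hF := ha.2.1 c hS
  have hsplit : ∀ y : ℕ → ℕ → ℕ, FC N B L u y =
      ∑ k ∈ range N, ∑ s ∈ range (σ k), tc B L (y s k) (y (s + 1) k) +
      ∑ k ∈ range N, ∑ s ∈ Ico (σ k) u, tc B L (y s k) (y (s + 1) k) := by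
    intro y
    unfold FC
    rw [← Finset.sum_add_distrib]
    refine Finset.sum_congr rfl fun k _ => ?_
    rw [Finset.sum_range_add_sum_Ico _ (hσu k)]
  rw [hsplit a, hsplit c] at hF
  have e1 : ∑ k ∈ range N, ∑ s ∈ range (σ k), tc B L (c s k) (c (s + 1) k) =
      ∑ k ∈ range N, ∑ s ∈ range (σ k), tc B L (b s k) (b (s + 1) k) := by
    refine Finset.sum_congr rfl fun k _ => Finset.sum_congr rfl fun s hs => ?_
    rw [Finset.mem_range] at hs
    rw [hc1 s k (by omega), hc1 (s + 1) k (by omega)]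
  have e2 : ∑ k ∈ range N, ∑ s ∈ Ico (σ k) u, tc B L (c s k) (c (s + 1) k) ≤
      ∑ k ∈ range N, ∑ s ∈ Ico (σ k) u, tc B L (a s k) (a (s + 1) k) := by
    refine Finset.sum_le_sum fun k _ => Finset.sum_le_sum fun s hs => ?_
    rw [Finset.mem_Ico] at hs
    rw [hc2 (s + 1) k (by omega)]
    exact tc_anti hB _ (le_max_left _ _)
  rw [e1] at hF
  linarith

lemma FC_ge_region {N : ℕ} {B L : ℕ → ℝ} (hL0 : L 0 = 0) (hLp : ∀ a, 1 ≤ a → 0 < L a)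
    (u : ℕ) (y : ℕ → ℕ → ℕ) (σ : ℕ → ℕ) (hσu : ∀ k, σ k ≤ u) :
    ∑ k ∈ range N, ∑ s ∈ range (σ k), tc B L (y s k) (y (s + 1) k) ≤ FC N B L u y := by
  unfold FC
  refine Finset.sum_le_sum fun k _ => ?_
  exact Finset.sum_le_sum_of_subset_of_nonneg (Finset.range_mono (hσu k))
      (fun t _ _ => tc_nonneg hL0 hLp _ _)

/-- The main lower bound on the optimal prefix costs, for a fixed type `i`. -/
lemma main_lower {d N : ℕ} {m lam : ℕ → ℕ} {B L : ℕ → ℝ} (hBm : Monotone B) (hB0 : B 0 = 0)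
    (hL0 : L 0 = 0) (hLp : ∀ a, 1 ≤ a → 0 < L a) (hLm : ∀ a b, 1 ≤ a → a ≤ b → L b ≤ L a)
    (T : ℕ) (b : ℕ → ℕ → ℕ → ℕ) (hb : ∀ u, u ≤ T → Best d N m B L lam u (b u))
    (i : ℕ) (hi : 1 ≤ i) (u : ℕ) (hu : u ≤ T) :
    ∑ k ∈ range N, gL B L (wt B L) (fun t => b t t k) i u ≤
    ∑ k ∈ range N, ∑ s ∈ range (sg (fun t => b t t k) i u), tc B L (b u s k) (b u (s + 1) k) := by
  have hB : ∀ i, 0 ≤ B i := fun i => by rw [← hB0]; exact hBm (Nat.zero_le i)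
  have hmono : ∀ n t, t + n ≤ T → ∀ s k, b t s k ≤ b (t + n) s k := by
    intro n
    induction n with
    | zero => intro t _ s k; exact le_rfl
    | succ n ih =>
      intro t ht s k
      exact (ih t (by omega) s k).trans
        (best_mono hBm (hb (t + n) (by omega)) (hb (t + n + 1) (by omega)) s k)
  induction u with
  | zero => simp [gL, sg]
  | succ u ih =>
    have ih := ih (by omega)
    have hbu := hb (u + 1) hu
    have hreg : ∀ k k', k ≤ k' → sg (fun t => if t ≤ u then b t t k' else 0) i u ≤
        sg (fun t => if t ≤ u then b t t k else 0) i u := by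
      intro k k' hk
      refine sg_anti (fun t => ?_) i u
      split_ifs with ht
      · exact (hb t (by omega)).1.anti t k k' hk
      · exact le_rfl
    have hcongr : ∀ k v, v ≤ u → sg (fun t => if t ≤ u then b t t k else 0) i v =
        sg (fun t => b t t k) i v := by
      intro k v
      induction v with
      | zero => intro _; rfl
      | succ v ihv =>
        intro hv
        simp only [sg]
        rw [ihv (by omega)]
        simp only [if_pos hv]
    have hhyb := hybrid hBm (hb u (by omega)) hbu.1 (fun t k => hmono 1 u hu t k)
      (fun k => sg (fun t => b t t k) i u)
      (fun k k' hk => by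
        have := hreg k k' hk
        rwa [hcongr k u le_rfl, hcongr k' u le_rfl] at this)
      (fun k => sg_le _ _ _)
    have hstep : ∑ k ∈ range N, (gL B L (wt B L) (fun t => b t t k) i (u + 1) -
          gL B L (wt B L) (fun t => b t t k) i u) ≤
        ∑ k ∈ range N, (∑ s ∈ range (sg (fun t => b t t k) i (u + 1)),
            tc B L (b (u + 1) s k) (b (u + 1) (s + 1) k) -
          ∑ s ∈ range (sg (fun t => b t t k) i u),
            tc B L (b (u + 1) s k) (b (u + 1) (s + 1) k)) := by
      refine Finset.sum_le_sum fun k _ => ?_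
      have hle := sg_le (fun t => b t t k) i u
      by_cases hge : i ≤ b (u + 1) (u + 1) k
      · have e : sg (fun t => b t t k) i (u + 1) = u + 1 := by
          rw [sg, if_pos hge]
        rw [e, ← Finset.sum_range_add_sum_Ico _ (show sg (fun t => b t t k) i u ≤ u + 1 by omega),
          add_sub_cancel_left, gL, add_sub_cancel_left]
        by_cases heq : b (u + 1) (u + 1) k = i
        · rw [if_pos heq]
          refine lane_opt hB hB0 hL0 hLp hLm (fun t => b t t k) (fun s => b (u + 1) s k) i u hi
            (hbu.1.1 k) heq (fun t ht => best_up hBm hLm hbu t k ht) ?_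
          intro t ht _
          obtain ⟨n, hn⟩ := Nat.exists_eq_add_of_le (show t ≤ u + 1 by omega)
          have := hmono n t (by omega) t k
          rwa [← hn] at this
        · rw [if_neg heq]
          exact Finset.sum_nonneg fun s _ => tc_nonneg hL0 hLp _ _
      · have e : sg (fun t => b t t k) i (u + 1) = sg (fun t => b t t k) i u := by
          rw [sg, if_neg hge]
        rw [e, sub_self, gL, add_sub_cancel_left, if_neg (by omega)]
    rw [Finset.sum_sub_distrib, Finset.sum_sub_distrib] at hstep
    linarith

/-! ### From schedules to lanes -/

def laneY (d : ℕ) (x : ℕ → ℕ → ℕ) (t k : ℕ) : ℕ :=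
  #{j ∈ Icc 1 d | k < ∑ j' ∈ Icc j d, x t j'}

lemma laneY_iff (d : ℕ) (x : ℕ → ℕ → ℕ) (t k j : ℕ) (hj : 1 ≤ j) (hjd : j ≤ d) :
    j ≤ laneY d x t k ↔ k < ∑ j' ∈ Icc j d, x t j' := by
  have hanti : ∀ i i', i ≤ i' → ∑ j' ∈ Icc i' d, x t j' ≤ ∑ j' ∈ Icc i d, x t j' :=
    fun i i' h => Finset.sum_le_sum_of_subset (Finset.Icc_subset_Icc_left h)
  constructor
  · intro h
    by_contra hk
    have hsub : ({j ∈ Icc 1 d | k < ∑ j' ∈ Icc j d, x t j'} : Finset ℕ) ⊆ Icc 1 (j - 1) := by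
      intro i hi
      rw [Finset.mem_filter, Finset.mem_Icc] at hi
      rw [Finset.mem_Icc]
      by_contra hc
      have := hanti j i (by omega)
      omega
    have := Finset.card_le_card hsub
    rw [Nat.card_Icc] at this
    unfold laneY at h
    omega
  · intro h
    have hsub : Icc 1 j ⊆ ({j ∈ Icc 1 d | k < ∑ j' ∈ Icc j d, x t j'} : Finset ℕ) := by
      intro i hi
      rw [Finset.mem_Icc] at hi
      rw [Finset.mem_filter, Finset.mem_Icc]
      have := hanti i j hi.2
      omega
    have := Finset.card_le_card hsub
    rw [Nat.card_Icc] at this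
    unfold laneY
    omega

lemma laneY_le (d : ℕ) (x : ℕ → ℕ → ℕ) (t k : ℕ) : laneY d x t k ≤ d := by
  unfold laneY
  refine (Finset.card_filter_le _ _).trans ?_
  simp

lemma laneY_zero (d : ℕ) (x : ℕ → ℕ → ℕ) (t k : ℕ) (h : ∑ j' ∈ Icc 1 d, x t j' ≤ k) :
    laneY d x t k = 0 := by
  by_contra h0
  have hd := laneY_le d x t k
  have := (laneY_iff d x t k 1 le_rfl (by omega)).1 (by omega)
  omega

lemma laneY_good (d : ℕ) (m : ℕ → ℕ) (x : ℕ → ℕ → ℕ) (t : ℕ) (hx : ∀ j, x t j ≤ m j) :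
    GoodSt d (∑ j ∈ Icc 1 d, m j) m (laneY d x t) := by
  refine ⟨laneY_le d x t, ?_, ?_, ?_⟩
  · intro k k' hk
    rcases Nat.eq_zero_or_pos (laneY d x t k') with h0 | h0
    · omega
    · have hd := laneY_le d x t k'
      have := (laneY_iff d x t k' _ h0 hd).1 le_rfl
      exact (laneY_iff d x t k _ h0 hd).2 (by omega)
  · intro j hj hjd k hk
    have h1 := (laneY_iff d x t _ j hj hjd).1 hk
    have h2 : ∑ j' ∈ Icc j d, x t j' = x t j + ∑ j' ∈ Icc (j + 1) d, x t j' := by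
      rw [← Finset.insert_Icc_add_one_left_eq_Icc hjd, Finset.sum_insert (by simp)]
    have h3 := hx j
    rcases Nat.lt_or_ge j d with h4 | h4
    · exact (laneY_iff d x t k (j + 1) (by omega) h4).2 (by omega)
    · have h5 : Icc (j + 1) d = ∅ := Finset.Icc_eq_empty (by omega)
      rw [h5, Finset.sum_empty] at h2
      omega
  · intro k hk
    refine laneY_zero d x t k ((Finset.sum_le_sum fun j _ => hx j).trans hk)

lemma laneY_sch {T d : ℕ} {m lam : ℕ → ℕ} {x : ℕ → ℕ → ℕ} (hd : 1 ≤ d) (hx : Feasible T d m lam x) :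
    Sch d (∑ j ∈ Icc 1 d, m j) m lam T (laneY d x) := by
  obtain ⟨h1, h2, h3⟩ := hx
  refine ⟨fun k => laneY_zero _ _ _ _ (by simp [h1]), fun t ht k => laneY_zero _ _ _ _
    (by simp [h2 t ht]), fun t ht1 ht2 => ?_⟩
  obtain ⟨h4, h5⟩ := h3 t (Finset.mem_Icc.2 ⟨ht1, ht2⟩)
  refine ⟨laneY_good d m x t h5, fun k hk => ?_⟩
  exact (laneY_iff d x t k 1 le_rfl hd).2 (by omega)

lemma tele_sum (f : ℕ → ℝ) (h0 : f 0 = 0) (d : ℕ) :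
    ∑ j ∈ Icc 1 d, (f j - f (j - 1)) = f d := by
  induction d with
  | zero => simp [h0]
  | succ d ih =>
    rw [Finset.sum_Icc_succ_top (by omega), ih]
    simp

lemma tele_sum_if (f : ℕ → ℝ) (h0 : f 0 = 0) (d y : ℕ) (hy : y ≤ d) :
    f y = ∑ j ∈ Icc 1 d, if j ≤ y then (f j - f (j - 1)) else 0 := by
  rw [← Finset.sum_filter, ← tele_sum f h0 y]
  refine Finset.sum_congr ?_ fun _ _ => rfl
  ext j
  simp only [Finset.mem_Icc, Finset.mem_filter]
  omega

lemma swap_sum (f : ℕ → ℝ) (h0 : f 0 = 0) (d : ℕ) (x : ℕ → ℕ) :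
    ∑ j ∈ Icc 1 d, (f j - f (j - 1)) * ((∑ j' ∈ Icc j d, x j' : ℕ) : ℝ) =
    ∑ j ∈ Icc 1 d, f j * (x j : ℝ) := by
  have : ∀ j ∈ Icc 1 d, f j * (x j : ℝ) = ∑ i ∈ Icc 1 j, (f i - f (i - 1)) * (x j : ℝ) := by
    intro j _
    rw [← Finset.sum_mul, tele_sum f h0]
  rw [Finset.sum_congr rfl this]
  push_cast
  simp only [Finset.mul_sum]
  refine Finset.sum_comm' ?_
  intro i j
  simp only [Finset.mem_Icc]
  omega

lemma lane_op (L : ℕ → ℝ) (hL0 : L 0 = 0) (d N : ℕ) (x : ℕ → ℕ → ℕ) (t : ℕ)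
    (hN : ∑ j ∈ Icc 1 d, x t j ≤ N) :
    ∑ k ∈ range N, L (laneY d x t k) = ∑ j ∈ Icc 1 d, L j * (x t j : ℝ) := by
  rw [← swap_sum L hL0 d (x t)]
  have : ∀ k ∈ range N, L (laneY d x t k) = ∑ j ∈ Icc 1 d,
      if k < ∑ j' ∈ Icc j d, x t j' then (L j - L (j - 1)) else 0 := by
    intro k _
    rw [tele_sum_if L hL0 d _ (laneY_le d x t k)]
    refine Finset.sum_congr rfl fun j hj => ?_
    rw [Finset.mem_Icc] at hj
    simp only [laneY_iff d x t k j hj.1 hj.2]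
  rw [Finset.sum_congr rfl this, Finset.sum_comm]
  refine Finset.sum_congr rfl fun j hj => ?_
  rw [Finset.mem_Icc] at hj
  rw [← Finset.sum_filter, Finset.sum_const, nsmul_eq_mul, mul_comm]
  congr 2
  have hle : ∑ j' ∈ Icc j d, x t j' ≤ N :=
    (Finset.sum_le_sum_of_subset (Finset.Icc_subset_Icc_left hj.1)).trans hN
  have : ({k ∈ range N | k < ∑ j' ∈ Icc j d, x t j'} : Finset ℕ) = range (∑ j' ∈ Icc j d, x t j') := by
    ext k
    simp only [Finset.mem_filter, Finset.mem_range]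
    omega
  rw [this, Finset.card_range]

lemma lane_sw (B : ℕ → ℝ) (hBm : Monotone B) (hB0 : B 0 = 0) (d N : ℕ) (x : ℕ → ℕ → ℕ) (t s : ℕ) :
    ∑ k ∈ range N, max 0 (B (laneY d x t k) - B (laneY d x s k)) ≤
      ∑ j ∈ Icc 1 d, B j * ((x t j - x s j : ℕ) : ℝ) := by
  rw [← swap_sum B hB0 d (fun j => x t j - x s j)]
  have hpos : ∀ j, 0 ≤ B j - B (j - 1) := fun j => sub_nonneg.2 (hBm (Nat.sub_le _ _))
  have h1 : ∀ k ∈ range N, max 0 (B (laneY d x t k) - B (laneY d x s k)) ≤ ∑ j ∈ Icc 1 d,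
      if (k < ∑ j' ∈ Icc j d, x t j') ∧ ¬ (k < ∑ j' ∈ Icc j d, x s j') then (B j - B (j - 1))
        else 0 := by
    intro k _
    refine max_le (Finset.sum_nonneg fun j _ => ?_) ?_
    · split_ifs
      · exact hpos j
      · exact le_rfl
    · rw [tele_sum_if B hB0 d _ (laneY_le d x t k), tele_sum_if B hB0 d _ (laneY_le d x s k),
        ← Finset.sum_sub_distrib]
      refine Finset.sum_le_sum fun j hj => ?_
      rw [Finset.mem_Icc] at hj
      simp only [laneY_iff d x t k j hj.1 hj.2, laneY_iff d x s k j hj.1 hj.2]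
      have := hpos j
      by_cases ha : k < ∑ j' ∈ Icc j d, x t j' <;> by_cases hb : k < ∑ j' ∈ Icc j d, x s j' <;>
        simp [ha, hb] <;> linarith
  refine (Finset.sum_le_sum h1).trans ?_
  rw [Finset.sum_comm]
  refine Finset.sum_le_sum fun j hj => ?_
  rw [← Finset.sum_filter, Finset.sum_const, nsmul_eq_mul, mul_comm]
  refine mul_le_mul_of_nonneg_left ?_ (hpos j)
  norm_cast
  have hsub : ({k ∈ range N | (k < ∑ j' ∈ Icc j d, x t j') ∧ ¬ (k < ∑ j' ∈ Icc j d, x s j')} :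
      Finset ℕ) ⊆ Ico (∑ j' ∈ Icc j d, x s j') (∑ j' ∈ Icc j d, x t j') := by
    intro k
    simp only [Finset.mem_filter, Finset.mem_range, Finset.mem_Ico]
    omega
  refine (Finset.card_le_card hsub).trans ?_
  rw [Nat.card_Ico, Nat.sub_le_iff_le_add, ← Finset.sum_add_distrib]
  exact Finset.sum_le_sum fun j' _ => by omega

lemma FC_laneY_le {T d : ℕ} {m lam : ℕ → ℕ} {x : ℕ → ℕ → ℕ} {B L β l : ℕ → ℝ}
    (hBm : Monotone B) (hB0 : B 0 = 0) (hL0 : L 0 = 0)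
    (hBβ : ∀ j, 1 ≤ j → j ≤ d → B j = β j) (hLl : ∀ j, 1 ≤ j → j ≤ d → L j = l j)
    (hx : Feasible T d m lam x) :
    FC (∑ j ∈ Icc 1 d, m j) B L T (laneY d x) ≤ cost T d β l x := by
  unfold FC cost
  rw [Finset.sum_comm, Finset.range_eq_Ico, Finset.sum_Ico_eq_sum_range]
  have hI : ∀ f : ℕ → ℝ, ∑ t ∈ Icc 1 T, f t = ∑ s ∈ range T, f (s + 1) := by
    intro f
    have := Finset.sum_Ico_eq_sum_range f 1 (T + 1)
    rw [show Icc 1 T = Ico 1 (T + 1) by ext; simp only [Finset.mem_Icc, Finset.mem_Ico]; omega, this]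
    simp [add_comm]
  rw [hI]
  simp only [Nat.sub_zero, zero_add]
  refine Finset.sum_le_sum fun s hs => ?_
  rw [Finset.mem_range] at hs
  unfold tc
  rw [Finset.sum_add_distrib, Finset.sum_add_distrib]
  have hle : ∑ j ∈ Icc 1 d, x (s + 1) j ≤ ∑ j ∈ Icc 1 d, m j :=
    Finset.sum_le_sum fun j _ => (hx.2.2 (s + 1) (Finset.mem_Icc.2 ⟨by omega, by omega⟩)).2 j
  have h1 := lane_op L hL0 d _ x (s + 1) hle
  have h2 := lane_sw B hBm hB0 d (∑ j ∈ Icc 1 d, m j) x (s + 1) s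
  rw [h1]
  refine add_le_add (le_of_eq ?_) (h2.trans (le_of_eq ?_))
  · refine Finset.sum_congr rfl fun j hj => ?_
    rw [Finset.mem_Icc] at hj
    rw [hLl j hj.1 hj.2]
  · refine Finset.sum_congr rfl fun j hj => ?_
    rw [Finset.mem_Icc] at hj
    rw [hBβ j hj.1 hj.2, Nat.add_sub_cancel]

/-! ### The online algorithm -/

def trunc (lam : ℕ → ℕ) (u : ℕ) : ℕ → ℕ := fun t => if 1 ≤ t ∧ t ≤ u then lam t else 0

open Classical in
noncomputable def bopt (d N : ℕ) (m : ℕ → ℕ) (B L : ℕ → ℝ) (lam : ℕ → ℕ) (u : ℕ) : ℕ → ℕ → ℕ :=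
  if h : ∃ y, Best d N m B L (trunc lam u) u y then h.choose else fun _ _ => 0

noncomputable def zsched (d N : ℕ) (m : ℕ → ℕ) (B L : ℕ → ℝ) (lam : ℕ → ℕ) (t k : ℕ) : ℕ :=
  zL (wt B L) (fun s => bopt d N m B L lam s s k) t

def lamOf (q : List ℕ) : ℕ → ℕ := fun t => if 1 ≤ t then q.getD (t - 1) 0 else 0

noncomputable def algA (d N : ℕ) (m : ℕ → ℕ) (B L : ℕ → ℝ) (q : List ℕ) (j : ℕ) : ℕ :=
  #{k ∈ range N | zsched d N m B L (lamOf q) q.length k = j}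

lemma lamOf_map (lam : ℕ → ℕ) (t : ℕ) :
    lamOf ((List.range t).map (fun i => lam (i + 1))) = trunc lam t := by
  funext s
  unfold lamOf trunc
  by_cases h1 : 1 ≤ s
  · by_cases h2 : s ≤ t
    · have h3 : s - 1 < t := by omega
      have h4 : s - 1 + 1 = s := by omega
      simp [h1, h2, h3, h4, List.getD]
    · have h3 : t ≤ s - 1 := by omega
      simp [h1, h2, h3, List.getD]
  · simp [h1]

lemma trunc_trunc (lam : ℕ → ℕ) (s t : ℕ) (h : s ≤ t) : trunc (trunc lam t) s = trunc lam s := by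
  funext r
  unfold trunc
  by_cases h1 : 1 ≤ r ∧ r ≤ s
  · rw [if_pos h1, if_pos h1, if_pos (by omega)]
  · rw [if_neg h1, if_neg h1]

lemma zL_congr (w h h' : ℕ → ℕ) (t : ℕ) (hh : ∀ s, s ≤ t → h s = h' s) :
    eL w h t = eL w h' t ∧ zL w h t = zL w h' t := by
  induction t with
  | zero => simp [eL, zL]
  | succ t ih =>
    obtain ⟨h1, h2⟩ := ih (fun s hs => hh s (by omega))
    have h3 := hh (t + 1) le_rfl
    have h4 : eL w h (t + 1) = eL w h' (t + 1) := by
      rw [eL, eL, h1, h3]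
    exact ⟨h4, by rw [zL, zL, h4, h2, h3]⟩

lemma zsched_trunc (d N : ℕ) (m : ℕ → ℕ) (B L : ℕ → ℝ) (lam : ℕ → ℕ) (t k : ℕ) :
    zsched d N m B L (trunc lam t) t k = zsched d N m B L lam t k := by
  unfold zsched
  refine (zL_congr _ _ _ t fun s hs => ?_).2
  unfold bopt
  rw [trunc_trunc lam s t hs]

lemma sch_trunc {d N : ℕ} {m lam : ℕ → ℕ} {u : ℕ} {y : ℕ → ℕ → ℕ} :
    Sch d N m (trunc lam u) u y ↔ Sch d N m lam u y := by
  unfold Sch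
  refine and_congr_right fun _ => and_congr_right fun _ => ?_
  refine forall_congr' fun t => forall_congr' fun h1 => forall_congr' fun h2 => ?_
  have : trunc lam u t = lam t := by
    unfold trunc
    rw [if_pos ⟨h1, h2⟩]
  rw [this]

lemma bopt_best {d : ℕ} (hd : 1 ≤ d) {m lam : ℕ → ℕ} {B L : ℕ → ℝ} {u : ℕ}
    (hlam : ∀ t ∈ Icc 1 u, lam t ≤ ∑ j ∈ Icc 1 d, m j) :
    Best d (∑ j ∈ Icc 1 d, m j) m B L lam u (bopt d (∑ j ∈ Icc 1 d, m j) m B L lam u) := by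
  have hf : Feasible u d m lam (fun t j => if t ∈ Icc 1 u then m j else 0) := by
    refine ⟨fun j => by simp, fun t ht j => ?_, fun t ht => ⟨?_, fun j => ?_⟩⟩
    · have : t ∉ Icc 1 u := by simp; omega
      simp only [if_neg this]
    · simp only [if_pos ht]; exact hlam t ht
    · simp only [if_pos ht]; exact le_rfl
  have h : ∃ y, Best d (∑ j ∈ Icc 1 d, m j) m B L (trunc lam u) u y :=
    exists_best B L ⟨_, sch_trunc.2 (laneY_sch hd hf)⟩
  have h2 := h.choose_spec
  unfold bopt
  rw [dif_pos h]
  unfold Best at h2 ⊢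
  simpa only [sch_trunc] using h2

lemma bopt_good {d N : ℕ} {m lam : ℕ → ℕ} {B L : ℕ → ℝ} {u : ℕ} (hu : 1 ≤ u) :
    GoodSt d N m (bopt d N m B L lam u u) := by
  unfold bopt
  split_ifs with h
  · exact (h.choose_spec.1.2.2 u hu le_rfl).1
  · exact ⟨fun _ => Nat.zero_le _, fun _ _ _ => le_rfl,
      fun j hj _ k hk => by simp at hk; omega, fun _ _ => rfl⟩

lemma bopt_le {d N : ℕ} {m lam : ℕ → ℕ} {B L : ℕ → ℝ} (u k : ℕ) :
    bopt d N m B L lam u u k ≤ d := by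
  unfold bopt
  split_ifs with h
  · exact h.choose_spec.1.le_d u k
  · exact Nat.zero_le _

lemma wt_mono {B L : ℕ → ℝ} (hBm : Monotone B) (hB0 : B 0 = 0)
    (hLp : ∀ a, 1 ≤ a → 0 < L a) (hLm : ∀ a b, 1 ≤ a → a ≤ b → L b ≤ L a) (a b : ℕ) (ha : 1 ≤ a)
    (hab : a ≤ b) : wt B L a ≤ wt B L b := by
  unfold wt
  refine Nat.floor_mono ?_
  have h0 : 0 ≤ B b := by rw [← hB0]; exact hBm (Nat.zero_le b)
  exact div_le_div₀ h0 (hBm hab) (hLp b (by omega)) (hLm a b ha hab)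

lemma eL_anti {w h h' : ℕ → ℕ} (hw : ∀ a b, 1 ≤ a → a ≤ b → w a ≤ w b)
    (hh : ∀ t, 1 ≤ t → h' t ≤ h t) (t : ℕ) : eL w h' t ≤ eL w h t := by
  induction t with
  | zero => simp [eL]
  | succ t ih =>
    rw [eL, eL]
    have h1 := hh (t + 1) (by omega)
    by_cases h0 : h' (t + 1) = 0
    · rw [if_pos h0]; omega
    · rw [if_neg h0, if_neg (by omega)]
      have := hw _ _ (by omega) h1
      omega

lemma zsched_good {d N : ℕ} {m lam : ℕ → ℕ} {B L : ℕ → ℝ} (hBm : Monotone B) (hB0 : B 0 = 0)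
    (hLp : ∀ a, 1 ≤ a → 0 < L a) (hLm : ∀ a b, 1 ≤ a → a ≤ b → L b ≤ L a) (t : ℕ) :
    GoodSt d N m (zsched d N m B L lam t) := by
  induction t with
  | zero =>
    exact ⟨fun _ => Nat.zero_le _, fun _ _ _ => le_rfl,
      fun j hj _ k hk => by simp [zsched, zL] at hk; omega, fun _ _ => rfl⟩
  | succ t ih =>
    have h1 := (ih.max (bopt_good (N := N) (m := m) (lam := lam) (B := B) (L := L) (d := d)
      (show 1 ≤ t + 1 by omega))).restrict
      (fun k => eL (wt B L) (fun s => bopt d N m B L lam s s k) (t + 1) ≠ 0)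
      (fun k k' hk h => by
        have := eL_anti (wt_mono hBm hB0 hLp hLm)
          (h := fun s => bopt d N m B L lam s s k) (h' := fun s => bopt d N m B L lam s s k')
          (fun s hs => (bopt_good hs).2.1 k k' hk) (t + 1)
        omega)
    convert h1 using 1
    funext k
    unfold zsched
    rw [zL]
    by_cases h : eL (wt B L) (fun s => bopt d N m B L lam s s k) (t + 1) = 0
    · rw [if_pos h, if_neg (by simp [h])]
    · rw [if_neg h, if_pos h]

lemma good_card {d N : ℕ} {m y : ℕ → ℕ} (hy : GoodSt d N m y) (j : ℕ) (hj : 1 ≤ j) (hjd : j ≤ d) :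
    #{k ∈ range N | y k = j} ≤ m j := by
  rcases Finset.eq_empty_or_nonempty {k ∈ range N | y k = j} with h | h
  · rw [h]; simp
  · have hmem := Finset.max'_mem _ h
    set K := Finset.max' _ h with hK
    rw [Finset.mem_filter] at hmem
    have hsub : ({k ∈ range N | y k = j} : Finset ℕ) ⊆ Ico (K + 1 - m j) (K + 1) := by
      intro k hk
      have h1 := Finset.le_max' _ k hk
      rw [Finset.mem_filter] at hk
      rw [Finset.mem_Ico]
      refine ⟨?_, by omega⟩
      by_contra hc
      have h2 := hy.2.1 (k + m j) K (by omega)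
      have h3 := hy.2.2.1 j hj hjd k (by omega)
      omega
    have := Finset.card_le_card hsub
    rw [Nat.card_Ico] at this
    omega

lemma sum_types (f : ℕ → ℝ) (h0 : f 0 = 0) (d N : ℕ) (z : ℕ → ℕ) (hz : ∀ k, z k ≤ d)
    (p : ℕ → Prop) [DecidablePred p] :
    ∑ j ∈ Icc 1 d, f j * ((#{k ∈ range N | z k = j ∧ p k} : ℕ) : ℝ) =
      ∑ k ∈ range N, if p k then f (z k) else 0 := by
  have : ∀ j ∈ Icc 1 d, f j * ((#{k ∈ range N | z k = j ∧ p k} : ℕ) : ℝ) =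
      ∑ k ∈ range N, if z k = j ∧ p k then f j else 0 := by
    intro j _
    rw [← Finset.sum_filter, Finset.sum_const, nsmul_eq_mul, mul_comm]
  rw [Finset.sum_congr rfl this, Finset.sum_comm]
  refine Finset.sum_congr rfl fun k _ => ?_
  by_cases hp : p k
  · simp only [hp, and_true, if_true]
    rcases Nat.eq_zero_or_pos (z k) with h | h
    · rw [h, h0]
      refine Finset.sum_eq_zero fun j hj => ?_
      rw [Finset.mem_Icc] at hj
      rw [if_neg (by omega)]
    · rw [Finset.sum_ite_eq, if_pos (Finset.mem_Icc.2 ⟨h, hz k⟩)]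
  · simp [hp]

/-- For `d` heterogeneous server types with sorted costs
(`l 1 > … > l d > 0`, `0 < β 1 < … < β d`, no inefficient types), there is a
deterministic online algorithm whose schedule is always feasible and whose total cost is
at most `2d` times the cost of any (in particular an optimal) feasible schedule. -/
theorem online_2d_competitive (d : ℕ) (hd : 1 ≤ d) (m : ℕ → ℕ) (β l : ℕ → ℝ)
    (hl : ∀ j j', 1 ≤ j → j < j' → j' ≤ d → l j' < l j)
    (hl0 : ∀ j, 1 ≤ j → j ≤ d → 0 < l j)
    (hβ : ∀ j j', 1 ≤ j → j < j' → j' ≤ d → β j < β j')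
    (hβ0 : ∀ j, 1 ≤ j → j ≤ d → 0 < β j) :
    ∃ A : List ℕ → ℕ → ℕ,
      ∀ (T : ℕ) (lam : ℕ → ℕ),
        (∀ t ∈ Finset.Icc 1 T, lam t ≤ ∑ j ∈ Finset.Icc 1 d, m j) →
        Feasible T d m lam (onlineSched A T d lam) ∧
        ∀ x', Feasible T d m lam x' →
          cost T d β l (onlineSched A T d lam) ≤ 2 * d * cost T d β l x' := by
  set N := ∑ j ∈ Finset.Icc 1 d, m j with hN
  set B : ℕ → ℝ := fun j => if j = 0 then 0 else β (min j d) with hBdef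
  set L : ℕ → ℝ := fun j => if j = 0 then 0 else l (min j d) with hLdef
  have hB0 : B 0 = 0 := by simp [B]
  have hL0 : L 0 = 0 := by simp [L]
  have hBβ : ∀ j, 1 ≤ j → j ≤ d → B j = β j := by
    intro j h1 h2
    simp only [B]
    rw [if_neg (by omega), min_eq_left h2]
  have hLl : ∀ j, 1 ≤ j → j ≤ d → L j = l j := by
    intro j h1 h2
    simp only [L]
    rw [if_neg (by omega), min_eq_left h2]
  have hBm : Monotone B := by
    intro a b hab
    simp only [B]
    by_cases ha : a = 0
    · rw [if_pos ha]
      split_ifs with hb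
      · exact le_rfl
      · exact (hβ0 _ (by omega) (by omega)).le
    · rw [if_neg ha, if_neg (by omega)]
      rcases Nat.lt_or_ge (min a d) (min b d) with h | h
      · exact (hβ _ _ (by omega) h (by omega)).le
      · rw [show min a d = min b d by omega]
  have hLp : ∀ a, 1 ≤ a → 0 < L a := by
    intro a ha
    simp only [L]
    rw [if_neg (by omega)]
    exact hl0 _ (by omega) (by omega)
  have hLm : ∀ a b, 1 ≤ a → a ≤ b → L b ≤ L a := by
    intro a b ha hab
    simp only [L]
    rw [if_neg (by omega), if_neg (by omega)]
    rcases Nat.lt_or_ge (min a d) (min b d) with h | h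
    · exact (hl _ _ (by omega) h (by omega)).le
    · rw [show min a d = min b d by omega]
  have hBn : ∀ i, 0 ≤ B i := fun i => by rw [← hB0]; exact hBm (Nat.zero_le i)
  refine ⟨algA d N m B L, fun T lam hlam => ?_⟩
  set z := zsched d N m B L lam with hz
  have hzg : ∀ t, GoodSt d N m (z t) := fun t => zsched_good hBm hB0 hLp hLm t
  have hX : ∀ t j, 1 ≤ t → t ≤ T → 1 ≤ j → j ≤ d →
      onlineSched (algA d N m B L) T d lam t j = #{k ∈ range N | z t k = j} := by
    intro t j h1 h2 h3 h4
    unfold onlineSched algA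
    rw [if_pos ⟨h1, h2, h3, h4⟩, lamOf_map]
    simp only [List.length_map, List.length_range, zsched_trunc]
    rfl
  have hX0 : ∀ j, 1 ≤ j → onlineSched (algA d N m B L) T d lam 0 j = #{k ∈ range N | z 0 k = j} := by
    intro j hj
    unfold onlineSched
    rw [if_neg (by omega)]
    symm
    rw [Finset.card_eq_zero, Finset.filter_eq_empty_iff]
    intro k _ h
    have : z 0 k = 0 := rfl
    omega
  have hbest : ∀ u, u ≤ T → Best d N m B L lam u (bopt d N m B L lam u) := fun u hu =>
    bopt_best hd (fun t ht => hlam t (Finset.Icc_subset_Icc_right hu ht))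
  constructor
  · refine ⟨fun j => ?_, fun t ht j => ?_, fun t ht => ⟨?_, fun j => ?_⟩⟩
    · unfold onlineSched
      rw [if_neg (by omega)]
    · unfold onlineSched
      rw [if_neg (by omega)]
    · have htT := Finset.mem_Icc.1 ht
      have h1 : ∑ j ∈ Icc 1 d, onlineSched (algA d N m B L) T d lam t j =
          ∑ j ∈ Icc 1 d, #{k ∈ range N | z t k = j} := by
        refine Finset.sum_congr rfl fun j hj => ?_
        rw [Finset.mem_Icc] at hj
        exact hX t j htT.1 htT.2 hj.1 hj.2
      rw [h1]
      have hsub : range (lam t) ⊆ (Icc 1 d).biUnion (fun j => {k ∈ range N | z t k = j}) := by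
        intro k hk
        rw [Finset.mem_range] at hk
        have h2 := hlam t ht
        have h3 : 1 ≤ z t k := by
          have h4 := ((hbest t htT.2).1.2.2 t htT.1 le_rfl).2 k hk
          obtain ⟨t', rfl⟩ : ∃ t', t = t' + 1 := ⟨t - 1, by omega⟩
          exact h4.trans (zL_ge (wt B L) (fun s => bopt d N m B L lam s s k) t')
        rw [Finset.mem_biUnion]
        refine ⟨z t k, Finset.mem_Icc.2 ⟨h3, (hzg t).1 k⟩, ?_⟩
        rw [Finset.mem_filter, Finset.mem_range]
        exact ⟨by omega, rfl⟩
      have := (Finset.card_le_card hsub).trans Finset.card_biUnion_le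
      rwa [Finset.card_range] at this
    · have htT := Finset.mem_Icc.1 ht
      by_cases hj : 1 ≤ j ∧ j ≤ d
      · rw [hX t j htT.1 htT.2 hj.1 hj.2]
        exact good_card (hzg t) j hj.1 hj.2
      · unfold onlineSched
        rw [if_neg (by omega)]
        exact Nat.zero_le _
  · intro x' hx'
    set C := FC N B L T (bopt d N m B L lam T) with hC
    have hCx : C ≤ cost T d β l x' :=
      ((hbest T le_rfl).2.1 _ (laneY_sch hd hx')).trans
        (FC_laneY_le hBm hB0 hL0 hBβ hLl hx')
    have hlow : ∀ i ∈ Icc 1 d,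
        ∑ k ∈ range N, gL B L (wt B L) (fun t => bopt d N m B L lam t t k) i T ≤ C := by
      intro i hi
      rw [Finset.mem_Icc] at hi
      refine (main_lower hBm hB0 hL0 hLp hLm T (fun u => bopt d N m B L lam u) hbest i hi.1 T
        le_rfl).trans ?_
      exact FC_ge_region hL0 hLp T _ _ (fun k => sg_le _ _ _)
    have hA1 : cost T d β l (onlineSched (algA d N m B L) T d lam) ≤
        ∑ k ∈ range N, ∑ s ∈ range T, (L (z (s + 1) k) +
          if z (s + 1) k ≠ z s k then B (z (s + 1) k) else 0) := by
      unfold cost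
      have hI : ∀ f : ℕ → ℝ, ∑ t ∈ Icc 1 T, f t = ∑ s ∈ range T, f (s + 1) := by
        intro f
        have := Finset.sum_Ico_eq_sum_range f 1 (T + 1)
        rw [show Icc 1 T = Ico 1 (T + 1) by ext; simp only [Finset.mem_Icc, Finset.mem_Ico]; omega, this]
        simp [add_comm]
      rw [hI, Finset.sum_comm (s := range N)]
      refine Finset.sum_le_sum fun s hs => ?_
      rw [Finset.mem_range] at hs
      rw [Finset.sum_add_distrib, Finset.sum_add_distrib]
      have e1 := sum_types L hL0 d N (z (s + 1)) (hzg _).1 (fun _ => True)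
      have e2 := sum_types B hB0 d N (z (s + 1)) (hzg _).1 (fun k => z (s + 1) k ≠ z s k)
      simp only [and_true, if_true] at e1
      rw [← e1, ← e2]
      refine add_le_add (le_of_eq ?_) ?_
      · refine Finset.sum_congr rfl fun j hj => ?_
        rw [Finset.mem_Icc] at hj
        rw [hLl j hj.1 hj.2, hX (s + 1) j (by omega) (by omega) hj.1 hj.2]
      · refine Finset.sum_le_sum fun j hj => ?_
        rw [Finset.mem_Icc] at hj
        rw [hBβ j hj.1 hj.2, hX (s + 1) j (by omega) (by omega) hj.1 hj.2, Nat.add_sub_cancel]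
        refine mul_le_mul_of_nonneg_left ?_ (hβ0 j hj.1 hj.2).le
        have e3 : onlineSched (algA d N m B L) T d lam s j = #{k ∈ range N | z s k = j} := by
          rcases Nat.eq_zero_or_pos s with h | h
          · rw [h]; exact hX0 j hj.1
          · exact hX s j h (by omega) hj.1 hj.2
        rw [e3]
        norm_cast
        rw [Nat.sub_le_iff_le_add]
        refine le_trans (Finset.card_le_card ?_) (Finset.card_union_le _ _)
        intro k
        simp only [Finset.mem_union, Finset.mem_filter]
        rintro ⟨h1, h2⟩
        by_cases h3 : z s k = j
        · exact Or.inr ⟨h1, h3⟩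
        · exact Or.inl ⟨h1, h2, by omega⟩
    have hA2 : ∀ k ∈ range N, ∑ s ∈ range T, (L (z (s + 1) k) +
          if z (s + 1) k ≠ z s k then B (z (s + 1) k) else 0) ≤
        ∑ i ∈ Icc 1 d, 2 * gL B L (wt B L) (fun t => bopt d N m B L lam t t k) i T := by
      intro k _
      have h1 := lane_alg hBn hL0 hB0 hLp hLm (fun t => bopt d N m B L lam t t k)
        (fun t => bopt_le (d := d) t k) T
      have h2 : 0 ≤ ∑ i ∈ Icc 1 d, L i *
          ((rL (wt B L) (fun t => bopt d N m B L lam t t k) i T - 1 : ℕ) : ℝ) :=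
        Finset.sum_nonneg fun i hi =>
          mul_nonneg (hLp i (Finset.mem_Icc.1 hi).1).le (Nat.cast_nonneg _)
      exact le_trans (le_add_of_nonneg_right h2) h1
    have hA3 := hA1.trans (Finset.sum_le_sum hA2)
    rw [Finset.sum_comm] at hA3
    simp only [← Finset.mul_sum] at hA3
    have hA4 := Finset.sum_le_sum hlow
    rw [Finset.sum_const, Nat.card_Icc, nsmul_eq_mul, Nat.add_sub_cancel] at hA4
    have hdp : (0 : ℝ) ≤ d := Nat.cast_nonneg d
    have := mul_le_mul_of_nonneg_left hCx hdp
    linarith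
end

section
/- No deterministic online algorithm for the data-center right-sizing problem with d heterogeneous server types and time- and load-independent operating costs achieves a competitive ratio smaller than 2d. -/
open Finset

/-! ### Auxiliary material for the lower bound -/

/-- the largest active type, `0` if there is none -/
def topType (d : ℕ) (x : ℕ → ℕ) : ℕ := ((Finset.Icc 1 d).filter (fun j => x j ≠ 0)).sup id

lemma topType_le (d : ℕ) (x : ℕ → ℕ) : topType d x ≤ d := by
  unfold topType
  apply Finset.sup_le
  intro j hj
  simp at hj
  exact hj.1.2

lemma topType_active (d : ℕ) (x : ℕ → ℕ) (h : 1 ≤ topType d x) : 1 ≤ x (topType d x) := by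
  have hne : ((Finset.Icc 1 d).filter (fun j => x j ≠ 0)).Nonempty := by
    by_contra hcon
    rw [Finset.not_nonempty_iff_eq_empty] at hcon
    unfold topType at h
    rw [hcon] at h
    simp at h
  obtain ⟨j, hj, hj2⟩ := Finset.exists_mem_eq_sup _ hne (id : ℕ → ℕ)
  have : topType d x = j := hj2
  rw [this]
  simp at hj
  omega

lemma topType_off (d : ℕ) (x : ℕ → ℕ) (j : ℕ) (h : topType d x < j) (hd : j ≤ d) : x j = 0 := by
  by_contra hcon
  have : id j ≤ topType d x := by
    unfold topType
    apply Finset.le_sup (f := id)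
    simp
    exact ⟨⟨by omega, hd⟩, hcon⟩
  simp at this
  omega

/-- the state of the online algorithm after a history -/
def histState (d : ℕ) (A : List ℕ → ℕ → ℕ) (h : List ℕ) : ℕ :=
  if h = [] then 0 else topType d (A h)

/-- the history produced by the adversary -/
def hist (d : ℕ) (A : List ℕ → ℕ → ℕ) : ℕ → List ℕ
  | 0 => []
  | t + 1 => hist d A t ++ [if histState d A (hist d A t) = 0 then 1 else 0]

/-- the job volumes of the adversary -/
def advLam (d : ℕ) (A : List ℕ → ℕ → ℕ) (t : ℕ) : ℕ :=
  if histState d A (hist d A (t - 1)) = 0 then 1 else 0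

lemma hist_eq (d : ℕ) (A : List ℕ → ℕ → ℕ) (t : ℕ) :
    (List.range t).map (fun i => advLam d A (i + 1)) = hist d A t := by
  induction t with
  | zero => simp [hist]
  | succ t ih =>
    rw [List.range_succ, List.map_append, ih]
    simp [hist, advLam]

lemma switch_count (q y : ℕ → ℕ) (hq : ∀ t, q t ≤ 1) (T : ℕ) (h0 : y 0 = 0)
    (h1 : ∀ t < T, y (t + 1) = q t) :
    ∑ t ∈ range T, (y (t + 1) - y t) ≤ 1 + ∑ t ∈ range T, (q t - q (t + 1)) := by
  have key : ∀ S, S ≤ T → ∑ t ∈ range S, (y (t + 1) - y t) + (y S - q S) ≤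
      y S + ∑ t ∈ range S, (q t - q (t + 1)) := by
    intro S
    induction S with
    | zero => simp [h0]
    | succ S ih =>
      intro hS
      have := ih (by omega)
      rw [sum_range_succ, sum_range_succ]
      have := h1 S (by omega)
      omega
  have := key T le_rfl
  have hy : y T ≤ 1 := by
    rcases T with _ | T
    · omega
    · rw [h1 T (by omega)]; exact hq T
  omega

lemma cost_range (T d : ℕ) (β l : ℕ → ℝ) (x : ℕ → ℕ → ℕ) :
    cost T d β l x = ∑ t ∈ range T, (∑ j ∈ Icc 1 d, l j * (x (t + 1) j : ℝ) +
      ∑ j ∈ Icc 1 d, β j * ((x (t + 1) j - x t j : ℕ) : ℝ)) := by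
  unfold cost
  have h := Finset.sum_Ico_add' (fun t => (∑ j ∈ Icc 1 d, l j * (x t j : ℝ) +
      ∑ j ∈ Icc 1 d, β j * ((x t j - x (t - 1) j : ℕ) : ℝ))) 0 T 1
  simp only [Nat.add_sub_cancel] at h
  rw [Finset.range_eq_Ico, h]
  apply Finset.sum_congr
  · ext; simp
  · intro t _
    rw [Finset.sum_add_distrib]

/-- the schedule which uses only type `j`, controlled by `q` -/
def single (T j : ℕ) (q : ℕ → ℕ) (t i : ℕ) : ℕ :=
  if i = j ∧ 1 ≤ t ∧ t ≤ T then q (t - 1) else 0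

lemma single_cost (T d j : ℕ) (hj : j ∈ Icc 1 d) (β l : ℕ → ℝ) (hβ : 0 ≤ β j) (q : ℕ → ℕ)
    (hq : ∀ t, q t ≤ 1) :
    cost T d β l (single T j q) ≤
      β j + ∑ t ∈ range T, (l j * (q t : ℝ) + β j * ((q t - q (t + 1) : ℕ) : ℝ)) := by
  have h1 := switch_count q (fun t => single T j q t j) hq T (by simp [single])
    (by intro t ht; simp [single]; omega)
  have h2 : cost T d β l (single T j q) = ∑ t ∈ range T, (l j * (q t : ℝ) +
      β j * ((single T j q (t + 1) j - single T j q t j : ℕ) : ℝ)) := by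
    rw [cost_range]
    apply Finset.sum_congr rfl
    intro t ht
    rw [Finset.mem_range] at ht
    congr 1
    · rw [Finset.sum_eq_single_of_mem j hj]
      · have : single T j q (t + 1) j = q t := by simp [single]; omega
        rw [this]
      · intro i _ hi; simp [single, hi]
    · rw [Finset.sum_eq_single_of_mem j hj]
      intro i _ hi; simp [single, hi]
  rw [h2, Finset.sum_add_distrib, Finset.sum_add_distrib, ← Finset.mul_sum _ _ (β j),
    ← Finset.mul_sum _ _ (β j)]
  have h3 : ((∑ t ∈ range T, ((single T j q (t + 1) j - single T j q t j : ℕ) : ℝ))) ≤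
      1 + ∑ t ∈ range T, ((q t - q (t + 1) : ℕ) : ℝ) := by exact_mod_cast h1
  nlinarith [mul_le_mul_of_nonneg_left h3 hβ]

lemma single_feasible (T d j : ℕ) (hj : j ∈ Icc 1 d) (lam q : ℕ → ℕ) (hq : ∀ t, q t ≤ 1)
    (h : ∀ t, lam (t + 1) ≤ q t) : Feasible T d (fun _ => 1) lam (single T j q) := by
  refine ⟨fun i => by simp [single], fun t ht i => by simp [single]; omega, ?_⟩
  intro t ht
  rw [Finset.mem_Icc] at ht
  obtain ⟨t, rfl⟩ : ∃ u, t = u + 1 := ⟨t - 1, by omega⟩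
  refine ⟨?_, ?_⟩
  · rw [Finset.sum_eq_single_of_mem j hj]
    · have : single T j q (t + 1) j = q t := by simp [single]; omega
      rw [this]; exact h t
    · intro i _ hi; simp [single, hi]
  · intro i
    unfold single
    split_ifs
    · exact hq _
    · exact Nat.zero_le _

/-- control of the first schedule of type `j` -/
def qA (s : ℕ → ℕ) (j t : ℕ) : ℕ := if s t ≤ j then 1 else 0
/-- control of the second schedule of type `j` -/
def qB (s : ℕ → ℕ) (j t : ℕ) : ℕ := if s t < j then 1 else 0

lemma sum_single_add (d k : ℕ) (hk : k ∈ Icc 1 d) (f : ℕ → ℝ) (a b : ℝ)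
    (h1 : f k ≤ a + b) (h2 : ∀ j ∈ Icc 1 d, j ≠ k → f j ≤ b) :
    ∑ j ∈ Icc 1 d, f j ≤ a + d * b := by
  have : ∑ j ∈ Icc 1 d, f j ≤ ∑ j ∈ Icc 1 d, ((if j = k then a else 0) + b) := by
    apply Finset.sum_le_sum
    intro j hj
    by_cases h : j = k
    · subst h; simpa using h1
    · simpa [h] using h2 j hj h
  rw [Finset.sum_add_distrib, Finset.sum_ite_eq' ] at this
  simpa [hk] using this

lemma pow_step (N : ℝ) (hN : 1 < N) (i j : ℕ) (h : i < j) : N ^ i ≤ N ^ j / N := by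
  rw [le_div_iff₀ (by linarith), ← pow_succ]
  exact pow_le_pow_right₀ hN.le h

lemma inv_step (N : ℝ) (hN : 1 < N) (i j : ℕ) (h : i < j) : (N ^ j)⁻¹ ≤ (N ^ i)⁻¹ / N := by
  rw [div_eq_mul_inv, ← mul_inv, ← pow_succ]
  have : 0 < N := by linarith
  exact inv_anti₀ (by positivity) (pow_le_pow_right₀ hN.le h)

lemma main_bound (T d : ℕ) (N : ℝ) (hN : 1 < N) (X : ℕ → ℕ → ℕ) (s : ℕ → ℕ)
    (hX0 : ∀ j, X 0 j = 0) (hs0 : ∀ t, s t ≤ d)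
    (hs1 : ∀ t ≤ T, 1 ≤ s t → 1 ≤ X t (s t))
    (hs2 : ∀ t ≤ T, ∀ j, s t < j → j ≤ d → X t j = 0)
    (hs3 : ∀ t < T, s t = 0 → 1 ≤ s (t + 1)) :
    (∑ j ∈ Icc 1 d, (cost T d (fun j => N ^ j) (fun j => (N ^ j)⁻¹) (single T j (qA s j)) +
      cost T d (fun j => N ^ j) (fun j => (N ^ j)⁻¹) (single T j (qB s j))) ≤
    (1 + 4 * d / N) * cost T d (fun j => N ^ j) (fun j => (N ^ j)⁻¹) X +
      2 * ∑ j ∈ Icc 1 d, N ^ j) ∧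
    T * (N ^ d)⁻¹ ≤ 2 * cost T d (fun j => N ^ j) (fun j => (N ^ j)⁻¹) X := by
  have hNp : 0 < N := by linarith
  set O : ℕ → ℝ := fun t => ∑ j ∈ Icc 1 d, (N ^ j)⁻¹ * (X t j : ℝ) with hO
  set W : ℕ → ℝ := fun t => ∑ j ∈ Icc 1 d, N ^ j * ((X (t + 1) j - X t j : ℕ) : ℝ) with hW
  have hcost : cost T d (fun j => N ^ j) (fun j => (N ^ j)⁻¹) X =
      ∑ t ∈ range T, O (t + 1) + ∑ t ∈ range T, W t := by
    rw [cost_range, Finset.sum_add_distrib]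
  have hO0 : O 0 = 0 := by simp [hO, hX0]
  have hOn : ∀ t, 0 ≤ O t := fun t => Finset.sum_nonneg (fun j _ => by positivity)
  have hWn : ∀ t, 0 ≤ W t := fun t => Finset.sum_nonneg (fun j _ => by positivity)
  have hOs : ∑ t ∈ range T, O t ≤ ∑ t ∈ range T, O (t + 1) := by
    have h1 := Finset.sum_range_succ' O T
    have h2 := Finset.sum_range_succ O T
    have := hOn T
    linarith
  have hOl : ∀ t ≤ T, 1 ≤ s t → (N ^ s t)⁻¹ ≤ O t := by
    intro t ht h
    have h1 : (N ^ s t)⁻¹ * (X t (s t) : ℝ) ≤ O t :=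
      Finset.single_le_sum (f := fun j => (N ^ j)⁻¹ * (X t j : ℝ))
        (fun j _ => by positivity) (by simp [h, hs0 t])
    have h2 : (1 : ℝ) ≤ X t (s t) := by exact_mod_cast hs1 t ht h
    have h3 : 0 < (N ^ s t)⁻¹ := by positivity
    nlinarith
  have hWl : ∀ t < T, s t < s (t + 1) → N ^ s (t + 1) ≤ W t := by
    intro t ht h
    have h1 : N ^ s (t + 1) * ((X (t + 1) (s (t + 1)) - X t (s (t + 1)) : ℕ) : ℝ) ≤ W t :=
      Finset.single_le_sum (f := fun j => N ^ j * ((X (t + 1) j - X t j : ℕ) : ℝ))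
        (fun j _ => by positivity) (by simp [hs0 (t + 1)]; omega)
    have h2 : (1 : ℝ) ≤ ((X (t + 1) (s (t + 1)) - X t (s (t + 1)) : ℕ) : ℝ) := by
      have := hs1 (t + 1) ht (by omega)
      have := hs2 t ht.le _ h (hs0 _)
      have : 1 ≤ X (t + 1) (s (t + 1)) - X t (s (t + 1)) := by omega
      exact_mod_cast this
    have h3 : 0 < N ^ s (t + 1) := by positivity
    nlinarith
  refine ⟨?_, ?_⟩
  · -- operating costs of the comparison schedules
    have hop : ∀ t < T, ∑ j ∈ Icc 1 d, (N ^ j)⁻¹ * ((qA s j t : ℝ) + (qB s j t : ℝ)) ≤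
        (1 + 2 * d / N) * O t + 2 * d / N * W t := by
      intro t ht
      rcases Nat.eq_zero_or_pos (s t) with h | h
      · have h1 := hs3 t ht h
        have h2 := hWl t ht (by omega)
        have h3 : 1 ≤ N ^ s (t + 1) := one_le_pow₀ hN.le
        have h4 : ∑ j ∈ Icc 1 d, (N ^ j)⁻¹ * ((qA s j t : ℝ) + (qB s j t : ℝ)) ≤
            ∑ j ∈ Icc 1 d, 2 * (1 / N) := by
          apply Finset.sum_le_sum
          intro j hj
          rw [Finset.mem_Icc] at hj
          have := inv_step N hN 0 j (by omega)
          have h5 : qA s j t = 1 := by simp [qA, h]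
          have h6 : qB s j t = 1 := by simp [qB, h]; omega
          rw [h5, h6]
          simp at this
          simp
          linarith
        simp at h4
        have h7 : 0 ≤ (1 + 2 * d / N) * O t := mul_nonneg (by positivity) (hOn t)
        have h8 : 2 * d / N * 1 ≤ 2 * d / N * W t :=
          mul_le_mul_of_nonneg_left (by linarith) (by positivity)
        have h9 : (d : ℝ) * (2 * N⁻¹) = 2 * d / N * 1 := by field_simp
        linarith
      · have h1 := hOl t ht.le h
        have h2 := sum_single_add d (s t) (by simp [hs0 t]; omega)
          (fun j => (N ^ j)⁻¹ * ((qA s j t : ℝ) + (qB s j t : ℝ))) ((N ^ s t)⁻¹)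
          (2 * ((N ^ s t)⁻¹ / N)) (by simp [qA, qB]; positivity) (by
            intro j hj hjs
            rcases lt_or_gt_of_ne hjs with hlt | hgt
            · have e1 : qA s j t = 0 := by simp [qA]; omega
              have e2 : qB s j t = 0 := by simp [qB]; omega
              simp only [e1, e2]
              simp; positivity
            · have e1 : qA s j t = 1 := by simp [qA]; omega
              have e2 : qB s j t = 1 := by simp [qB]; omega
              simp only [e1, e2]
              have := inv_step N hN _ _ hgt
              push_cast
              linarith)
        have h3 : 0 ≤ 2 * d / N * W t := mul_nonneg (by positivity) (hWn t)
        have h4 : (1 + 2 * d / N) * (N ^ s t)⁻¹ ≤ (1 + 2 * d / N) * O t :=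
          mul_le_mul_of_nonneg_left h1 (by positivity)
        have h5 : (N ^ s t)⁻¹ + d * (2 * ((N ^ s t)⁻¹ / N)) = (1 + 2 * d / N) * (N ^ s t)⁻¹ := by
          ring
        linarith
    have hsw : ∀ t < T, ∑ j ∈ Icc 1 d, N ^ j * (((qA s j t - qA s j (t + 1) : ℕ) : ℝ) +
        ((qB s j t - qB s j (t + 1) : ℕ) : ℝ)) ≤ (1 + 2 * d / N) * W t := by
      intro t ht
      rcases le_or_gt (s (t + 1)) (s t) with h | h
      · have : ∑ j ∈ Icc 1 d, N ^ j * (((qA s j t - qA s j (t + 1) : ℕ) : ℝ) +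
            ((qB s j t - qB s j (t + 1) : ℕ) : ℝ)) = 0 := by
          apply Finset.sum_eq_zero
          intro j _
          have e1 : qA s j t - qA s j (t + 1) = 0 := by unfold qA; split_ifs <;> omega
          have e2 : qB s j t - qB s j (t + 1) = 0 := by unfold qB; split_ifs <;> omega
          simp [e1, e2]
        rw [this]
        exact mul_nonneg (by positivity) (hWn t)
      · have h1 := hWl t ht h
        have h2 := sum_single_add d (s (t + 1)) (by simp [hs0 (t + 1)]; omega)
          (fun j => N ^ j * (((qA s j t - qA s j (t + 1) : ℕ) : ℝ) +
            ((qB s j t - qB s j (t + 1) : ℕ) : ℝ))) (N ^ s (t + 1))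
          (2 * (N ^ s (t + 1) / N)) (by
            have e1 : qA s (s (t + 1)) t - qA s (s (t + 1)) (t + 1) = 0 := by
              unfold qA; split_ifs <;> omega
            have e2 : qB s (s (t + 1)) t - qB s (s (t + 1)) (t + 1) = 1 := by
              unfold qB; split_ifs <;> omega
            simp only [e1, e2]
            simp; positivity) (by
            intro j hj hjs
            rcases lt_or_gt_of_ne hjs with hlt | hgt
            · have e1 : qA s j t - qA s j (t + 1) ≤ 1 := by unfold qA; split_ifs <;> omega
              have e2 : qB s j t - qB s j (t + 1) ≤ 1 := by unfold qB; split_ifs <;> omega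
              have e1' : ((qA s j t - qA s j (t + 1) : ℕ) : ℝ) ≤ 1 := by exact_mod_cast e1
              have e2' : ((qB s j t - qB s j (t + 1) : ℕ) : ℝ) ≤ 1 := by exact_mod_cast e2
              have := pow_step N hN _ _ hlt
              have hp : 0 < N ^ j := by positivity
              nlinarith
            · have e1 : qA s j t - qA s j (t + 1) = 0 := by unfold qA; split_ifs <;> omega
              have e2 : qB s j t - qB s j (t + 1) = 0 := by unfold qB; split_ifs <;> omega
              simp only [e1, e2]
              simp; positivity)
        have h4 : (1 + 2 * d / N) * (N ^ s (t + 1)) ≤ (1 + 2 * d / N) * W t :=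
          mul_le_mul_of_nonneg_left h1 (by positivity)
        have h5 : (N ^ s (t + 1)) + d * (2 * (N ^ s (t + 1) / N)) =
            (1 + 2 * d / N) * (N ^ s (t + 1)) := by ring
        linarith
    have hA : ∀ j t, qA s j t ≤ 1 := by intro j t; unfold qA; split_ifs <;> omega
    have hB : ∀ j t, qB s j t ≤ 1 := by intro j t; unfold qB; split_ifs <;> omega
    calc _ ≤ ∑ j ∈ Icc 1 d, (2 * N ^ j + ∑ t ∈ range T,
          ((N ^ j)⁻¹ * ((qA s j t : ℝ) + (qB s j t : ℝ)) +
            N ^ j * (((qA s j t - qA s j (t + 1) : ℕ) : ℝ) +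
              ((qB s j t - qB s j (t + 1) : ℕ) : ℝ)))) := by
          apply Finset.sum_le_sum
          intro j hj
          have h1 := single_cost T d j hj (fun j => N ^ j) (fun j => (N ^ j)⁻¹)
            (by positivity) (qA s j) (hA j)
          have h2 := single_cost T d j hj (fun j => N ^ j) (fun j => (N ^ j)⁻¹)
            (by positivity) (qB s j) (hB j)
          refine (add_le_add h1 h2).trans (le_of_eq ?_)
          simp only [mul_add, Finset.sum_add_distrib]
          ring
      _ = 2 * ∑ j ∈ Icc 1 d, N ^ j + ∑ t ∈ range T,
          (∑ j ∈ Icc 1 d, (N ^ j)⁻¹ * ((qA s j t : ℝ) + (qB s j t : ℝ)) +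
           ∑ j ∈ Icc 1 d, N ^ j * (((qA s j t - qA s j (t + 1) : ℕ) : ℝ) +
              ((qB s j t - qB s j (t + 1) : ℕ) : ℝ))) := by
          rw [Finset.sum_add_distrib, Finset.sum_comm, ← Finset.mul_sum]
          congr 1
          apply Finset.sum_congr rfl
          intro t _
          rw [Finset.sum_add_distrib]
      _ ≤ 2 * ∑ j ∈ Icc 1 d, N ^ j + ∑ t ∈ range T,
          ((1 + 2 * d / N) * O t + (1 + 4 * d / N) * W t) := by
          refine add_le_add le_rfl (Finset.sum_le_sum fun t ht => ?_)
          rw [Finset.mem_range] at ht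
          have := hop t ht
          have := hsw t ht
          have : (1 + 4 * d / N) * W t = 2 * d / N * W t + (1 + 2 * d / N) * W t := by ring
          linarith
      _ ≤ _ := by
          rw [hcost, Finset.sum_add_distrib, ← Finset.mul_sum, ← Finset.mul_sum]
          have h1 : 0 ≤ ∑ t ∈ range T, O (t + 1) := Finset.sum_nonneg (fun t _ => hOn _)
          have h2 : (1 + 2 * d / N) * ∑ t ∈ range T, O t ≤
              (1 + 4 * d / N) * ∑ t ∈ range T, O (t + 1) := by
            apply mul_le_mul _ hOs (Finset.sum_nonneg (fun t _ => hOn _)) (by positivity)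
            gcongr
            norm_num
          linarith
  · have h1 : ∀ t < T, (N ^ d)⁻¹ ≤ O t + O (t + 1) := by
      intro t ht
      have hle : ∀ u, (N ^ d)⁻¹ ≤ (N ^ s u)⁻¹ := fun u =>
        inv_anti₀ (by positivity) (pow_le_pow_right₀ hN.le (hs0 u))
      rcases Nat.eq_zero_or_pos (s t) with h | h
      · have := hOl (t + 1) ht (hs3 t ht h)
        have := hle (t + 1)
        have := hOn t
        linarith
      · have := hOl t ht.le h
        have := hle t
        have := hOn (t + 1)
        linarith
    have h2 : ∑ t ∈ range T, (N ^ d)⁻¹ ≤ ∑ t ∈ range T, (O t + O (t + 1)) :=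
      Finset.sum_le_sum (fun t ht => h1 t (Finset.mem_range.1 ht))
    rw [Finset.sum_add_distrib] at h2
    simp only [Finset.sum_const, Finset.card_range, nsmul_eq_mul] at h2
    have h3 : 0 ≤ ∑ t ∈ range T, W t := Finset.sum_nonneg (fun t _ => hWn _)
    rw [hcost]
    linarith

/-- No deterministic online algorithm for data-center right-sizing with
`d` heterogeneous server types and time- and load-independent operating costs achieves
a competitive ratio `c < 2d`: there is no online algorithm (possibly depending on the
instance parameters `m`, `β`, `l`) that, on every instance with sorted efficient costs,
produces a feasible schedule of cost at most `c` times the cost of every feasible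
schedule. -/
theorem no_better_than_2d (d : ℕ) (hd : 1 ≤ d) (c : ℝ) (hc : c < 2 * d) :
    ¬ ∃ A : (ℕ → ℕ) → (ℕ → ℝ) → (ℕ → ℝ) → List ℕ → ℕ → ℕ,
      ∀ (m : ℕ → ℕ) (β l : ℕ → ℝ),
        (∀ j j', 1 ≤ j → j < j' → j' ≤ d → l j' < l j) →
        (∀ j, 1 ≤ j → j ≤ d → 0 < l j) →
        (∀ j j', 1 ≤ j → j < j' → j' ≤ d → β j < β j') →
        (∀ j, 1 ≤ j → j ≤ d → 0 < β j) →
        ∀ (T : ℕ) (lam : ℕ → ℕ),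
          (∀ t ∈ Finset.Icc 1 T, lam t ≤ ∑ j ∈ Finset.Icc 1 d, m j) →
          Feasible T d m lam (onlineSched (A m β l) T d lam) ∧
          ∀ x', Feasible T d m lam x' →
            cost T d β l (onlineSched (A m β l) T d lam) ≤ c * cost T d β l x' := by
  rintro ⟨A, hA⟩
  have hdR : (1 : ℝ) ≤ d := by exact_mod_cast hd
  obtain ⟨c', hc0, hcc, hc2⟩ : ∃ c' : ℝ, 0 ≤ c' ∧ c ≤ c' ∧ c' < 2 * d :=
    ⟨max c 0, le_max_right _ _, le_max_left _ _, max_lt hc (by linarith)⟩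
  have hgap : 0 < 2 * d - c' := by linarith
  obtain ⟨N, hN, hN2⟩ : ∃ N : ℝ, 1 < N ∧ c' * (1 + 4 * d / N) < 2 * d := by
    have h0 : 0 ≤ 4 * d * c' / (2 * d - c') := by positivity
    refine ⟨4 * d * c' / (2 * d - c') + 2, by linarith, ?_⟩
    set N := 4 * d * c' / (2 * d - c') + 2 with hNdef
    have hNp : 0 < N := by linarith
    have h1 : N * (2 * d - c') = 4 * d * c' + 2 * (2 * d - c') := by
      rw [hNdef, add_mul, div_mul_cancel₀ _ hgap.ne']
    have h2 : c' * (1 + 4 * d / N) = c' + 4 * d * c' / N := by ring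
    have h3 : 4 * d * c' / N < 2 * d - c' := by
      rw [div_lt_iff₀ hNp]; linarith
    linarith
  have hNp : 0 < N := by linarith
  set β : ℕ → ℝ := fun j => N ^ j with hβ
  set l : ℕ → ℝ := fun j => (N ^ j)⁻¹ with hl
  have hA1 := hA (fun _ => 1) β l
    (fun j j' _ h _ => inv_strictAnti₀ (by positivity) (pow_lt_pow_right₀ hN h))
    (fun j _ _ => by positivity)
    (fun j j' _ h _ => pow_lt_pow_right₀ hN h)
    (fun j _ _ => by positivity)
  clear hA
  set B := A (fun _ => 1) β l with hB
  set C := ∑ j ∈ Icc 1 d, N ^ j with hC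
  set g := 2 * d - c' * (1 + 4 * d / N) with hg
  have hgp : 0 < g := by linarith
  obtain ⟨T, hT⟩ := exists_nat_gt (4 * c' * C / (g * (N ^ d)⁻¹))
  rw [div_lt_iff₀ (by positivity)] at hT
  set s : ℕ → ℕ := fun t => histState d B (hist d B t) with hs
  have hlam : ∀ t, advLam d B (t + 1) = if s t = 0 then 1 else 0 := by
    intro t; simp [advLam, hs]
  have hlam1 : ∀ t, advLam d B t ≤ 1 := by intro t; unfold advLam; split_ifs <;> omega
  obtain ⟨hfeas, hcomp⟩ := hA1 T (advLam d B) (by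
    intro t _
    have := hlam1 t
    simp
    omega)
  set X := onlineSched B T d (advLam d B) with hX
  have hXt : ∀ t ≤ T, 1 ≤ t → ∀ j, 1 ≤ j → j ≤ d → X t j = B (hist d B t) j := by
    intro t ht h1 j hj hjd
    simp only [hX, onlineSched, hist_eq]
    rw [if_pos ⟨h1, ht, hj, hjd⟩]
  have hX0 : ∀ j, X 0 j = 0 := hfeas.1
  have hst : ∀ t, 1 ≤ t → s t = topType d (B (hist d B t)) := by
    intro t ht
    obtain ⟨u, rfl⟩ : ∃ u, t = u + 1 := ⟨t - 1, by omega⟩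
    simp only [hs, histState]
    rw [if_neg]
    simp [hist]
  have hs00 : s 0 = 0 := by simp [hs, histState, hist]
  have hs0 : ∀ t, s t ≤ d := by
    intro t
    rcases Nat.eq_zero_or_pos t with rfl | h
    · omega
    · rw [hst t h]; exact topType_le _ _
  have hs1 : ∀ t ≤ T, 1 ≤ s t → 1 ≤ X t (s t) := by
    intro t ht h
    rcases Nat.eq_zero_or_pos t with rfl | h1
    · omega
    · rw [hXt t ht h1 _ h (hs0 t)]
      rw [hst t h1] at h ⊢
      exact topType_active _ _ h
  have hs2 : ∀ t ≤ T, ∀ j, s t < j → j ≤ d → X t j = 0 := by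
    intro t ht j h hj
    rcases Nat.eq_zero_or_pos t with rfl | h1
    · exact hX0 j
    · rw [hXt t ht h1 _ (by omega) hj]
      rw [hst t h1] at h
      exact topType_off _ _ _ h hj
  have hs3 : ∀ t < T, s t = 0 → 1 ≤ s (t + 1) := by
    intro t ht h
    have h1 := (hfeas.2.2 (t + 1) (by simp; omega)).1
    rw [hlam, if_pos h] at h1
    by_contra hcon
    have : ∑ j ∈ Icc 1 d, X (t + 1) j = 0 := by
      apply Finset.sum_eq_zero
      intro j hj
      rw [Finset.mem_Icc] at hj
      exact hs2 (t + 1) ht j (by omega) hj.2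
    omega
  obtain ⟨hm1, hm2⟩ := main_bound T d N hN X s hX0 hs0 hs1 hs2 hs3
  have hnn : ∀ x, 0 ≤ cost T d β l x := by
    intro x
    unfold cost
    exact Finset.sum_nonneg (fun t _ => Finset.sum_nonneg (fun j _ => by positivity))
  have hcA : ∀ j ∈ Icc 1 d, cost T d β l X ≤ c' * cost T d β l (single T j (qA s j)) := by
    intro j hj
    refine (hcomp _ (single_feasible T d j hj _ _ ?_ ?_)).trans
      (mul_le_mul_of_nonneg_right hcc (hnn _))
    · intro t; unfold qA; split_ifs <;> omega
    · intro t; rw [hlam]; unfold qA; split_ifs <;> omega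
  have hcB : ∀ j ∈ Icc 1 d, cost T d β l X ≤ c' * cost T d β l (single T j (qB s j)) := by
    intro j hj
    refine (hcomp _ (single_feasible T d j hj _ _ ?_ ?_)).trans
      (mul_le_mul_of_nonneg_right hcc (hnn _))
    · intro t; unfold qB; split_ifs <;> omega
    · rw [Finset.mem_Icc] at hj
      intro t; rw [hlam]; unfold qB; split_ifs <;> omega
  have hsum : ∑ j ∈ Icc 1 d, (2 * cost T d β l X) ≤ ∑ j ∈ Icc 1 d,
      c' * (cost T d β l (single T j (qA s j)) + cost T d β l (single T j (qB s j))) := by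
    apply Finset.sum_le_sum
    intro j hj
    have := hcA j hj
    have := hcB j hj
    linarith
  rw [← Finset.mul_sum (Icc 1 d) _ c'] at hsum
  simp only [Finset.sum_const, Nat.card_Icc, nsmul_eq_mul, Nat.add_sub_cancel] at hsum
  have hfin := hsum.trans (mul_le_mul_of_nonneg_left hm1 hc0)
  have h1 : g * cost T d β l X ≤ 2 * c' * C := by
    rw [hg]; linarith
  have h2 : g * (T * (N ^ d)⁻¹) ≤ g * (2 * cost T d β l X) :=
    mul_le_mul_of_nonneg_left hm2 hgp.le
  linarith
end
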